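/- Let k ≥ 1 and let (X,T) be a ℤ^k-system with the marker property. Then mdim(X) = 0 if and only if X is isomorphic (equivariantly homeomorphic) to the inverse limit of a sequence of ℤ^k-systems each having finite topological entropy. -/

import Mathlib

/-!
**Inverse limits of finite entropy systems have zero mean dimension.** Mean dimension is detected on
the factors, so it suffices to see that finite entropy makes `widim` small. Compose the distance
functions to a finite net with a staircase which is constant (integral) except on a set of phases
of proportion `1/Q`, where the phase is shifted independently at every site of a block. Since there
are only exponentially many orbit types, some choice of shifts leaves few non-integral coordinates
along every orbit (`exists_pick`), and the resulting map is an `ε`-embedding into a low dimensional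
complex (`widimLe_of_few_nonint`, `exists_widimLe_of_htop`).

**Zero mean dimension and markers give an inverse limit.** A set has *zero capacity* if every orbit
visits it with small frequency, uniformly at some scale (`SmallSet`). The argument goes as follows.

* The marker property yields a continuous Rokhlin lemma (`exists_towers`): towers of shape
  `{0,…,N-1}^k` covering all orbits up to a small proportion. They come from the power diagrams of
  the marker points, weighted by a continuous marker function; shrinking each cell slightly towards
  its site creates a gap (`gap_of_isNearest`), and the loss of volume is small (`card_bad_le`).
* When the mean dimension vanishes, a function can be replaced on each tower by a generic one which
  factors through a complex of dimension `D`, with `D` much smaller than `N ^ k`; a generic map from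
  such a complex to `ℝ^(N^k)` has at most `D` coordinates equal to a given value
  (`exists_generic`). So a level set can be made of small capacity by a small perturbation
  (`exists_perturb`), and by the Baire category theorem all rational level sets simultaneously
  (`exists_smallSet_rat`).
* Applying staircases at the scales `2^{-j}` successively to such a function gives a continuous
  function `h`, at bounded distance from the original one, with values in `2^{-j} ℤ` off a set of
  times of density at most `2^{-j}`, for every `j` (`NiceFn`, `exists_nice`).
* The names of orbits under such an `h` are exponentially few, with a rate that does not depend on
  the precision (`exists_names`), so a system whose points are separated by the orbits of finitely
  many nice functions has finite entropy (`htop_lt_top_of_nice`).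
* Approximating large multiples of distance functions by nice functions gives a sequence of nice
  functions separating points; the itineraries under the first `n` of them form the factors
  `nameSys`, whose inverse limit is `X`.
-/

open Set Filter
open scoped NNReal ENNReal Topology

/-- A continuous action of `ℤ^k` on a topological space. -/
structure IsZkAction {k : ℕ} {X : Type*} [TopologicalSpace X]
    (T : (Fin k → ℤ) → X → X) : Prop where
  cont : ∀ n, Continuous (T n)
  map_zero : ∀ x, T 0 x = x
  map_add : ∀ m n x, T (m + n) x = T m (T n x)

/-- The marker property for a `ℤ^k`-action. -/
def MarkerProperty {k : ℕ} {X : Type*} [TopologicalSpace X]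
    (T : (Fin k → ℤ) → X → X) : Prop :=
  ∀ F : Finset (Fin k → ℤ), ∃ U : Set X, IsOpen U ∧
    (⋃ n : Fin k → ℤ, T n '' U) = Set.univ ∧
    ∀ n ∈ F, n ≠ 0 → U ∩ T n '' U = ∅

/-- `f` is an `ε`-embedding with respect to the (pseudo-)distance `ρ`:
every fiber of `f` has `ρ`-diameter `< ε`. -/
def IsEpsEmbedding {X Y : Type*} [TopologicalSpace X] [TopologicalSpace Y]
    (ρ : X → X → ℝ) (ε : ℝ) (f : X → Y) : Prop :=
  Continuous f ∧ ∀ x y, f x = f y → ρ x y < ε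

/-- `widim_ε(X, ρ)`: the least `n` such that there is an `ε`-embedding of `X`
into a finite simplicial complex of dimension at most `n`. -/
noncomputable def widim (X : Type*) [TopologicalSpace X] (ρ : X → X → ℝ) (ε : ℝ) : ℕ :=
  sInf {n : ℕ | ∃ (m : ℕ) (P : Geometry.SimplicialComplex ℝ (EuclideanSpace ℝ (Fin m))),
    P.faces.Finite ∧ (∀ s ∈ P.faces, s.card ≤ n + 1) ∧
    ∃ f : X → P.space, IsEpsEmbedding ρ ε f}

/-- The distance `ρ_{[N]}(x,y) = sup_{a ∈ {0,…,N-1}^k} ρ(T^a x, T^a y)`. -/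
noncomputable def blockRho {k : ℕ} {X : Type*} (T : (Fin k → ℤ) → X → X)
    (ρ : X → X → ℝ) (N : ℕ) (x y : X) : ℝ :=
  ⨆ a : Fin k → Fin N, ρ (T (fun i => (a i : ℤ)) x) (T (fun i => (a i : ℤ)) y)

/-- Mean dimension of a `ℤ^k`-system:
`mdim(X) = lim_{ε→0} lim_{N→∞} widim_ε(X, d_{[N]})/N^k`, where the limit in `N`
equals the infimum (subadditivity) and the limit in `ε` equals the supremum
(monotonicity). -/
noncomputable def mdim {k : ℕ} (X : Type*) [MetricSpace X]
    (T : (Fin k → ℤ) → X → X) : ℝ≥0∞ :=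
  ⨆ (ε : ℝ) (_ : 0 < ε), ⨅ (N : ℕ) (_ : 1 ≤ N),
    (widim X (blockRho T dist N) ε : ℝ≥0∞) / (N : ℝ≥0∞) ^ k

/-- `A(X, ε, ρ)`: minimal cardinality of an open cover of `X` by sets of
`ρ`-diameter `< ε`. -/
noncomputable def coverNum (X : Type*) [TopologicalSpace X] (ρ : X → X → ℝ) (ε : ℝ) : ℕ :=
  sInf {n : ℕ | ∃ U : Fin n → Set X, (∀ i, IsOpen (U i)) ∧ (⋃ i, U i) = Set.univ ∧
    ∀ i, ∀ x ∈ U i, ∀ y ∈ U i, ρ x y < ε}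

/-- `S(X, ε, ρ) = lim_{N→∞} N^{-k} log A(X, ε, ρ_{[N]})`; by subadditivity the
limit equals the infimum over `N ≥ 1`. -/
noncomputable def entScale {k : ℕ} (X : Type*) [TopologicalSpace X]
    (T : (Fin k → ℤ) → X → X) (ρ : X → X → ℝ) (ε : ℝ) : ℝ≥0∞ :=
  ⨅ (N : ℕ) (_ : 1 ≤ N),
    ENNReal.ofReal (Real.log ((coverNum X (blockRho T ρ N) ε : ℝ))) / (N : ℝ≥0∞) ^ k

/-- Topological entropy `h_top(X) = lim_{ε→0} S(X,ε,d) = sup_{ε>0} S(X,ε,d)`. -/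
noncomputable def htop {k : ℕ} (X : Type*) [MetricSpace X]
    (T : (Fin k → ℤ) → X → X) : ℝ≥0∞ :=
  ⨆ (ε : ℝ) (_ : 0 < ε), entScale X T dist ε

/-- Metric mean dimension `mmdim(X,d) = liminf_{ε→0⁺} S(X,ε,d)/|log ε|`. -/
noncomputable def mmdim {k : ℕ} (X : Type*) [MetricSpace X]
    (T : (Fin k → ℤ) → X → X) : ℝ≥0∞ :=
  Filter.liminf (fun ε : ℝ => entScale X T dist ε / ENNReal.ofReal |Real.log ε|)
    (nhdsWithin 0 (Set.Ioi 0))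

/-- A bundled `ℤ^k`-system: a compact metric space with a continuous `ℤ^k`-action. -/
structure ZkSystem (k : ℕ) where
  carrier : Type
  [met : MetricSpace carrier]
  [cpt : CompactSpace carrier]
  act : (Fin k → ℤ) → carrier → carrier
  isAction : IsZkAction act

attribute [instance] ZkSystem.met ZkSystem.cpt

/-- A factor map between `ℤ^k`-systems: an equivariant continuous surjection. -/
def IsFactorMap {k : ℕ} (A B : ZkSystem k) (p : A.carrier → B.carrier) : Prop :=
  Continuous p ∧ Function.Surjective p ∧ ∀ g x, p (A.act g x) = B.act g (p x)

/-! ### Nerves, block distances and `widim` -/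

/-- The complexes and maps competing in the definition of `widim`: an `ε`-embedding into a finite
complex of dimension at most `n` exists. -/
def WidimLe (X : Type*) [TopologicalSpace X] (ρ : X → X → ℝ) (ε : ℝ) (n : ℕ) : Prop :=
  ∃ (m : ℕ) (P : Geometry.SimplicialComplex ℝ (EuclideanSpace ℝ (Fin m))),
    P.faces.Finite ∧ (∀ s ∈ P.faces, s.card ≤ n + 1) ∧
    ∃ f : X → P.space, IsEpsEmbedding ρ ε f

/-- The nerve map: a finite family of nonnegative weights, at most `D + 1` of which are positive at
each point, gives an `ε`-embedding into a `D`-dimensional complex as soon as two points on which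
a common weight is positive are `ε`-close. -/
lemma widimLe_of_weights {X : Type*} [TopologicalSpace X] (ρ : X → X → ℝ) (ε : ℝ) (D : ℕ)
    {V : Type*} [Fintype V] (w : V → X → ℝ) (hc : ∀ v, Continuous (w v))
    (h0 : ∀ v x, 0 ≤ w v x) (hpos : ∀ x, ∃ v, 0 < w v x)
    (hcard : ∀ x (s : Finset V), (∀ v ∈ s, 0 < w v x) → s.card ≤ D + 1)
    (hclose : ∀ v x y, 0 < w v x → 0 < w v y → ρ x y < ε) :
    WidimLe X ρ ε D := by
  classical
  let m := Fintype.card V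
  let eV : V ≃ Fin m := Fintype.equivFin V
  let e : V → EuclideanSpace ℝ (Fin m) := fun v => EuclideanSpace.single (eV v) (1 : ℝ)
  have he : Function.Injective e := by
    intro a b hab
    have := congrArg (fun z : EuclideanSpace ℝ (Fin m) => z (eV a)) hab
    simp only [e, PiLp.single_apply] at this
    by_contra hne
    simp [hne] at this
  have hind : AffineIndependent ℝ e := by
    have h1 : LinearIndependent ℝ e := by
      rw [Fintype.linearIndependent_iff]
      intro g hg v
      have := congrArg (fun z : EuclideanSpace ℝ (Fin m) => z (eV v)) hg
      simpa [e, WithLp.ofLp_sum, Finset.sum_apply, Pi.single_apply] using this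
    exact h1.affineIndependent
  let abs : PreAbstractSimplicialComplex (EuclideanSpace ℝ (Fin m)) :=
    { faces := {s | s.Nonempty ∧ s.card ≤ D + 1 ∧ (s : Set (EuclideanSpace ℝ (Fin m))) ⊆ range e}
      isRelLowerSet_faces := by
        rintro s ⟨h1, h2, h3⟩
        refine ⟨h1, fun t hts ht => ⟨ht, (Finset.card_le_card hts).trans h2, ?_⟩⟩
        exact (Finset.coe_subset.2 hts).trans h3 }
  let P : Geometry.SimplicialComplex ℝ (EuclideanSpace ℝ (Fin m)) :=
    Geometry.SimplicialComplex.ofAffineIndependent abs (by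
      refine hind.range.mono fun x hx => ?_
      simp only [Set.mem_iUnion, Finset.mem_coe] at hx
      obtain ⟨s, hs, hx⟩ := hx
      exact hs.2.2 hx)
  have hPf : P.faces = abs.faces := rfl
  let S : X → ℝ := fun x => ∑ v, w v x
  have hS : ∀ x, 0 < S x := fun x => by
    obtain ⟨v, hv⟩ := hpos x
    exact Finset.sum_pos' (fun v _ => h0 v x) ⟨v, Finset.mem_univ _, hv⟩
  have hScont : Continuous S := continuous_finsetSum _ fun v _ => hc v
  let F : X → EuclideanSpace ℝ (Fin m) := fun x => ∑ v, (w v x / S x) • e v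
  have hFcont : Continuous F := by
    refine continuous_finsetSum _ fun v _ => ?_
    exact ((hc v).div hScont fun x => (hS x).ne').smul continuous_const
  have hFapp : ∀ x v, F x (eV v) = w v x / S x := by
    intro x v
    simp only [F, e, WithLp.ofLp_sum, Finset.sum_apply, PiLp.smul_apply,
      PiLp.single_apply, smul_eq_mul]
    rw [Finset.sum_eq_single v]
    · simp
    · intro b _ hb
      simp [eV.injective.ne hb.symm]
    · simp
  have hFmem : ∀ x, F x ∈ P.space := by
    intro x
    let s : Finset V := Finset.univ.filter fun v => 0 < w v x
    rw [Geometry.SimplicialComplex.mem_space_iff]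
    refine ⟨s.image e, ?_, ?_⟩
    · rw [hPf]
      refine ⟨?_, ?_, ?_⟩
      · obtain ⟨v, hv⟩ := hpos x
        exact ⟨e v, Finset.mem_image_of_mem _ (by simp [s, hv])⟩
      · refine Finset.card_image_le.trans (hcard x s fun v hv => ?_)
        simpa [s] using hv
      · intro z hz
        simp only [Finset.coe_image, Set.mem_image] at hz
        obtain ⟨v, _, rfl⟩ := hz
        exact ⟨v, rfl⟩
    · have : F x = ∑ v ∈ s, (w v x / S x) • e v := by
        symm
        refine Finset.sum_subset (Finset.subset_univ _) fun v _ hv => ?_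
        have : w v x = 0 := le_antisymm (by simpa [s] using hv) (h0 v x)
        simp [this]
      rw [this]
      refine (convex_convexHull ℝ _).sum_mem ?_ ?_ ?_
      · intro v _
        exact div_nonneg (h0 v x) (hS x).le
      · rw [← Finset.sum_div]
        have : ∑ v ∈ s, w v x = S x := by
          refine Finset.sum_subset (Finset.subset_univ _) fun v _ hv => ?_
          exact le_antisymm (by simpa [s] using hv) (h0 v x)
        rw [this, div_self (hS x).ne']
      · intro v hv
        exact subset_convexHull ℝ _ (by simpa using ⟨v, hv, rfl⟩)
  refine ⟨m, P, ?_, ?_, fun x => ⟨F x, hFmem x⟩, ?_, ?_⟩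
  · rw [hPf]
    refine Set.Finite.subset (Finset.finite_toSet ((Finset.univ.image e).powerset)) ?_
    rintro s ⟨_, _, h3⟩
    simp only [Finset.coe_powerset, Set.mem_preimage, Set.mem_powerset_iff]
    simpa using h3
  · intro s hs
    exact hs.2.1
  · exact hFcont.subtype_mk _
  · intro x y hxy
    have hxy' : F x = F y := congrArg Subtype.val hxy
    obtain ⟨v, hv⟩ := hpos x
    refine hclose v x y hv ?_
    have h1 := hFapp x v
    rw [hxy', hFapp y v] at h1
    have h2 : 0 < w v y / S y := h1 ▸ div_pos hv (hS x)
    by_contra hcon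
    have : w v y = 0 := le_antisymm (not_lt.1 hcon) (h0 v y)
    simp [this] at h2

lemma widim_le_of_widimLe {X : Type*} [TopologicalSpace X] {ρ : X → X → ℝ} {ε : ℝ} {D : ℕ}
    (h : WidimLe X ρ ε D) : widim X ρ ε ≤ D := Nat.sInf_le h

lemma blockRho_lt_iff {k : ℕ} {X : Type*} (T : (Fin k → ℤ) → X → X) (ρ : X → X → ℝ) {N : ℕ}
    (hN : 1 ≤ N) (x y : X) (ε : ℝ) :
    blockRho T ρ N x y < ε ↔ ∀ a : Fin k → Fin N,
      ρ (T (fun i => (a i : ℤ)) x) (T (fun i => (a i : ℤ)) y) < ε := by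
  have : Nonempty (Fin k → Fin N) := ⟨fun _ => ⟨0, hN⟩⟩
  unfold blockRho
  constructor
  · intro h a
    exact lt_of_le_of_lt (le_ciSup (f := fun a : Fin k → Fin N =>
      ρ (T (fun i => (a i : ℤ)) x) (T (fun i => (a i : ℤ)) y)) (Set.finite_range _).bddAbove a) h
  · intro h
    obtain ⟨a, ha⟩ := exists_eq_ciSup_of_finite (f := fun a : Fin k → Fin N =>
      ρ (T (fun i => (a i : ℤ)) x) (T (fun i => (a i : ℤ)) y))
    rw [← ha]
    exact h a

/-- On a compact system some finite dimension suffices, so `widim` is a genuine minimum. -/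
lemma exists_widimLe {k : ℕ} {X : Type*} [MetricSpace X] [CompactSpace X]
    {T : (Fin k → ℤ) → X → X} (hT : IsZkAction T) {N : ℕ} (hN : 1 ≤ N) {ε : ℝ} (hε : 0 < ε) :
    ∃ D, WidimLe X (blockRho T dist N) ε D := by
  classical
  let w : X → X → ℝ := fun p x => ∏ a : Fin k → Fin N,
    max 0 (ε / 2 - dist (T (fun i => (a i : ℤ)) x) (T (fun i => (a i : ℤ)) p))
  have hwc : ∀ p, Continuous (w p) := fun p => continuous_finsetProd _ fun a _ =>
    continuous_const.max (continuous_const.sub ((hT.cont _).dist continuous_const))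
  have hw0 : ∀ p x, 0 ≤ w p x := fun p x => Finset.prod_nonneg fun a _ => le_max_left _ _
  have hwpos : ∀ p x, 0 < w p x → ∀ a : Fin k → Fin N,
      dist (T (fun i => (a i : ℤ)) x) (T (fun i => (a i : ℤ)) p) < ε / 2 := by
    intro p x h a
    by_contra hcon
    have h1 : w p x = 0 := Finset.prod_eq_zero (Finset.mem_univ a)
      (max_eq_left (by linarith [not_lt.1 hcon]))
    exact h.ne' h1
  have hww : ∀ p, 0 < w p p := fun p => Finset.prod_pos fun a _ => by simp [hε]
  obtain ⟨s, hs⟩ := isCompact_univ.elim_finite_subcover (fun p : X => {x | 0 < w p x})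
    (fun p => isOpen_lt continuous_const (hwc p))
    (fun x _ => Set.mem_iUnion.2 ⟨x, hww x⟩)
  refine ⟨s.card, widimLe_of_weights _ _ _ (V := s) (fun p x => w p x) (fun p => hwc p)
    (fun p x => hw0 p x) ?_ ?_ ?_⟩
  · intro x
    have := hs (Set.mem_univ x)
    simp only [Set.mem_iUnion] at this
    obtain ⟨p, hp, hx⟩ := this
    exact ⟨⟨p, hp⟩, hx⟩
  · intro x t _
    have := Finset.card_le_univ t
    rw [Fintype.card_coe] at this
    omega
  · intro p x y hx hy
    rw [blockRho_lt_iff T dist hN]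
    intro a
    have h1 := hwpos p x hx a
    have h2 := hwpos p y hy a
    have := dist_triangle_right (T (fun i => (a i : ℤ)) x) (T (fun i => (a i : ℤ)) y)
      (T (fun i => (a i : ℤ)) p)
    linarith

lemma widimLe_widim {k : ℕ} {X : Type*} [MetricSpace X] [CompactSpace X]
    {T : (Fin k → ℤ) → X → X} (hT : IsZkAction T) {N : ℕ} (hN : 1 ≤ N) {ε : ℝ} (hε : 0 < ε) :
    WidimLe X (blockRho T dist N) ε (widim X (blockRho T dist N) ε) :=
  Nat.sInf_mem (s := {n | WidimLe X (blockRho T dist N) ε n}) (exists_widimLe hT hN hε)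

/-! ### Kuhn triangulations and few non-integer coordinates -/

/-- A map into `ℝ^ι` each of whose values has at most `D` non-integer coordinates lands in the
`D`-skeleton of the Kuhn (Freudenthal) triangulation. The weights below are positive on the
vertices `v` with `|v i - p i| < 1` and all differences `(v j - p j) - (v i - p i) < 1`; such
vertices form a chain inside a cube whose dimension is the number of non-integer coordinates. -/
lemma widimLe_of_few_nonint {X : Type*} [TopologicalSpace X] (ρ : X → X → ℝ) (ε : ℝ) (D : ℕ)
    {ι : Type*} [Fintype ι] (p : X → ι → ℝ) (hc : ∀ i, Continuous fun x => p x i)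
    (B : ℕ) (hB : ∀ x i, |p x i| ≤ B)
    (hD : ∀ x (s : Finset ι), (∀ i ∈ s, (⌊p x i⌋ : ℝ) ≠ p x i) → s.card ≤ D)
    (hclose : ∀ x y, (∀ i, |p x i - p y i| < 2) → ρ x y < ε) :
    WidimLe X ρ ε D := by
  classical
  let V : Finset (ι → ℤ) := Fintype.piFinset fun _ : ι => Finset.Icc (-(B : ℤ)) B
  let w : (ι → ℤ) → X → ℝ := fun v x =>
    (∏ i, max 0 (1 - |(v i : ℝ) - p x i|)) *
      ∏ i, ∏ j, max 0 (1 - ((v j : ℝ) - p x j) + ((v i : ℝ) - p x i))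
  have hw0 : ∀ v x, 0 ≤ w v x := fun v x => mul_nonneg
    (Finset.prod_nonneg fun i _ => le_max_left _ _)
    (Finset.prod_nonneg fun i _ => Finset.prod_nonneg fun j _ => le_max_left _ _)
  have hpos : ∀ v x, 0 < w v x → (∀ i, |(v i : ℝ) - p x i| < 1) ∧
      ∀ i j, ((v j : ℝ) - p x j) - ((v i : ℝ) - p x i) < 1 := by
    intro v x h
    constructor
    · intro i
      by_contra hcon
      refine h.ne' (mul_eq_zero_of_left (Finset.prod_eq_zero (Finset.mem_univ i) ?_) _)
      exact max_eq_left (by linarith [not_lt.1 hcon])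
    · intro i j
      by_contra hcon
      refine h.ne' (mul_eq_zero_of_right _ (Finset.prod_eq_zero (Finset.mem_univ i)
        (Finset.prod_eq_zero (Finset.mem_univ j) ?_)))
      exact max_eq_left (by linarith [not_lt.1 hcon])
  refine widimLe_of_weights ρ ε D (V := V) (fun v x => w v x) ?_ (fun v x => hw0 v x) ?_ ?_ ?_
  · intro v
    refine Continuous.mul (continuous_finsetProd _ fun i _ => ?_)
      (continuous_finsetProd _ fun i _ => continuous_finsetProd _ fun j _ => ?_)
    · have := hc i
      fun_prop
    · have := hc i
      have := hc j
      fun_prop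
  · intro x
    refine ⟨⟨fun i => ⌊p x i⌋, ?_⟩, ?_⟩
    · rw [Fintype.mem_piFinset]
      intro i
      have := abs_le.1 (hB x i)
      rw [Finset.mem_Icc]
      constructor
      · exact Int.le_floor.2 (by push_cast; exact this.1)
      · have h1 : (⌊p x i⌋ : ℝ) ≤ B := (Int.floor_le _).trans this.2
        exact_mod_cast h1
    · refine mul_pos (Finset.prod_pos fun i _ => ?_)
        (Finset.prod_pos fun i _ => Finset.prod_pos fun j _ => ?_)
      · have h1 := Int.floor_le (p x i)
        have h2 := Int.lt_floor_add_one (p x i)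
        refine lt_max_of_lt_right ?_
        have : |(⌊p x i⌋ : ℝ) - p x i| < 1 := by rw [abs_lt]; constructor <;> linarith
        linarith
      · have h1 := Int.floor_le (p x j)
        have h2 := Int.lt_floor_add_one (p x i)
        refine lt_max_of_lt_right ?_
        linarith
  · intro x s hs
    let R : V → Finset ι := fun v => Finset.univ.filter fun i => p x i < (v.1 i : ℝ)
    have hval : ∀ v ∈ s, ∀ i, v.1 i = ⌊p x i⌋ + if i ∈ R v then 1 else 0 := by
      intro v hv i
      have h1 := abs_lt.1 ((hpos v x (hs v hv)).1 i)
      have h2 := Int.floor_le (p x i)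
      have h3 := Int.lt_floor_add_one (p x i)
      by_cases hi : i ∈ R v
      · have hi' : p x i < (v.1 i : ℝ) := by simpa [R] using hi
        rw [if_pos hi]
        have h4 : ((⌊p x i⌋ : ℤ) : ℝ) < (v.1 i : ℝ) := by linarith
        have h5 : (v.1 i : ℝ) < ((⌊p x i⌋ + 2 : ℤ) : ℝ) := by push_cast; linarith
        have h6 := Int.cast_lt.1 h4
        have h7 := Int.cast_lt.1 h5
        omega
      · have hi' : (v.1 i : ℝ) ≤ p x i := by simpa [R] using hi
        rw [if_neg hi, add_zero]
        have h4 : (v.1 i : ℝ) < ((⌊p x i⌋ + 1 : ℤ) : ℝ) := by push_cast; linarith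
        have h5 : ((⌊p x i⌋ : ℤ) : ℝ) < ((v.1 i + 1 : ℤ) : ℝ) := by push_cast; linarith
        have h6 := Int.cast_lt.1 h4
        have h7 := Int.cast_lt.1 h5
        omega
    have hchain : ∀ v ∈ s, ∀ v' ∈ s, R v ⊆ R v' ∨ R v' ⊆ R v := by
      intro v hv v' hv'
      by_contra hcon
      push Not at hcon
      obtain ⟨i, hi, hi'⟩ := Finset.not_subset.1 hcon.1
      obtain ⟨j, hj, hj'⟩ := Finset.not_subset.1 hcon.2
      have h1 := (hpos v x (hs v hv)).2 j i
      have h2 := (hpos v' x (hs v' hv')).2 i j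
      have e1 := hval v hv i
      have e2 := hval v hv j
      have e3 := hval v' hv' i
      have e4 := hval v' hv' j
      rw [if_pos hi] at e1
      rw [if_neg hj'] at e2
      rw [if_neg hi'] at e3
      rw [if_pos hj] at e4
      rw [e1, e2] at h1
      rw [e3, e4] at h2
      push_cast at h1 h2
      linarith
    have hR : ∀ v ∈ s, (R v).card ≤ D := by
      intro v hv
      refine hD x _ fun i hi hintg => ?_
      have h1 := abs_lt.1 ((hpos v x (hs v hv)).1 i)
      have e1 := hval v hv i
      rw [if_pos hi] at e1
      rw [e1] at h1
      push_cast at h1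
      linarith
    have := Finset.card_le_card_of_injOn (s := s) (t := Finset.range (D + 1))
      (fun v => (R v).card) (fun v hv => by simpa [Nat.lt_succ_iff] using hR v hv) (by
        intro v hv v' hv' hvv
        have hRR : R v = R v' := by
          rcases hchain v hv v' hv' with h | h
          · exact Finset.eq_of_subset_of_card_le h hvv.ge
          · exact (Finset.eq_of_subset_of_card_le h hvv.le).symm
        apply Subtype.ext
        funext i
        rw [hval v hv i, hval v' hv' i, hRR])
    simpa using this
  · intro v x y hx hy
    refine hclose x y fun i => ?_
    have h1 := abs_lt.1 ((hpos v x hx).1 i)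
    have h2 := abs_lt.1 ((hpos v y hy).1 i)
    rw [abs_lt]
    constructor <;> linarith

/-- The shifted staircase: integer valued except on the intervals `[m + q/Q, m + (q+1)/Q]`. -/
noncomputable def stairQ (Q q : ℕ) (t : ℝ) : ℝ :=
  ⌊t - q / Q⌋ + min 1 (Q * Int.fract (t - q / Q))

lemma continuous_stairQ {Q : ℕ} (hQ : 1 ≤ Q) (q : ℕ) : Continuous (stairQ Q q) := by
  have hu : ContinuousOn (fun f : ℝ => min 1 (Q * f) - f) (Icc 0 1) := by fun_prop
  have hQ' : (1 : ℝ) ≤ Q := by exact_mod_cast hQ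
  have h1 := hu.comp_fract'' (by simp [hQ'])
  have h2 : Continuous fun s : ℝ => s + ((fun f : ℝ => min 1 (Q * f) - f) ∘ Int.fract) s :=
    continuous_id.add h1
  have h3 : stairQ Q q = (fun s : ℝ => s + ((fun f : ℝ => min 1 (Q * f) - f) ∘ Int.fract) s) ∘
      fun t => t - q / Q := by
    funext t
    simp only [stairQ, Function.comp]
    have := Int.floor_add_fract (t - q / Q : ℝ)
    linarith
  rw [h3]
  exact h2.comp (continuous_id.sub continuous_const)

lemma abs_stairQ_sub_le {Q q : ℕ} (hq : q < Q) (t : ℝ) : |stairQ Q q t - t| ≤ 1 := by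
  have hQ0 : (0 : ℝ) < Q := by exact_mod_cast (Nat.zero_le q).trans_lt hq
  have hQ1 : (1 : ℝ) ≤ Q := by exact_mod_cast (Nat.zero_le q).trans_lt hq
  have h1 : (0 : ℝ) ≤ q / Q := by positivity
  have h2 : (q : ℝ) / Q ≤ 1 := by
    rw [div_le_one hQ0]
    exact_mod_cast hq.le
  have h3 := Int.floor_add_fract (t - q / Q : ℝ)
  have h4 := Int.fract_nonneg (t - q / Q : ℝ)
  have h5 := Int.fract_lt_one (t - q / Q : ℝ)
  have h6 : Int.fract (t - q / Q : ℝ) ≤ min 1 (Q * Int.fract (t - q / Q)) :=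
    le_min h5.le (le_mul_of_one_le_left h4 hQ1)
  have h7 := min_le_left 1 (Q * Int.fract (t - q / Q : ℝ))
  unfold stairQ
  rw [abs_le]
  constructor <;> linarith

lemma floor_mod_of_stairQ_nonint {Q : ℕ} [NeZero Q] (q : ZMod Q) (t : ℝ)
    (h : (⌊stairQ Q q.val t⌋ : ℝ) ≠ stairQ Q q.val t) : ((⌊Q * t⌋ : ℤ) : ZMod Q) = q := by
  have hQ0 : (0 : ℝ) < Q := by exact_mod_cast NeZero.pos Q
  have h4 := Int.fract_nonneg (t - q.val / Q : ℝ)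
  have h3 := Int.floor_add_fract (t - q.val / Q : ℝ)
  have hlt : Q * Int.fract (t - q.val / Q : ℝ) < 1 := by
    by_contra hcon
    apply h
    rw [stairQ, min_eq_left (not_lt.1 hcon)]
    have : (⌊(t - q.val / Q : ℝ)⌋ : ℝ) + 1 = ((⌊(t - q.val / Q : ℝ)⌋ + 1 : ℤ) : ℝ) := by
      push_cast; rfl
    rw [this, Int.floor_intCast]
  have hfl : ⌊Q * t⌋ = Q * ⌊(t - q.val / Q : ℝ)⌋ + q.val := by
    rw [Int.floor_eq_iff]
    have e : Q * t = Q * (t - q.val / Q : ℝ) + q.val := by field_simp; ring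
    push_cast
    rw [e]
    constructor <;> nlinarith
  rw [hfl]
  push_cast
  simp

/-- Union bound: if `A · 2^|ι| · 3^(D+1) < Q^(D+1)`, some choice `ξ` hits every one of the `A`
families of sets of size at most `3` in at most `D` coordinates. -/
lemma exists_pick {ι : Type*} [Fintype ι] (A Q D : ℕ) [NeZero Q]
    (B : Fin A → ι → Finset (ZMod Q)) (hB : ∀ j c, (B j c).card ≤ 3)
    (h : A * 2 ^ Fintype.card ι * 3 ^ (D + 1) < Q ^ (D + 1)) :
    ∃ ξ : ι → ZMod Q, ∀ j (s : Finset ι), (∀ c ∈ s, ξ c ∈ B j c) → s.card ≤ D := by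
  classical
  by_contra hcon
  push Not at hcon
  let n := Fintype.card ι
  let bad : Fin A → Finset ι → Finset (ι → ZMod Q) := fun j S =>
    Fintype.piFinset fun c => if c ∈ S then B j c else Finset.univ
  have hbad : ∀ j, ∀ S ∈ (Finset.univ : Finset ι).powersetCard (D + 1),
      (bad j S).card * Q ^ (D + 1) ≤ 3 ^ (D + 1) * Q ^ n := by
    intro j S hS
    have hScard : S.card = D + 1 := (Finset.mem_powersetCard.1 hS).2
    have e1 : (bad j S).card ≤ ∏ c, if c ∈ S then 3 else Q := by
      rw [Fintype.card_piFinset]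
      refine Finset.prod_le_prod' fun c _ => ?_
      split_ifs
      · exact hB j c
      · simp [ZMod.card]
    have e2 : (∏ c : ι, if c ∈ S then 3 else Q) * Q ^ (D + 1) = 3 ^ (D + 1) * Q ^ n := by
      have e3 : Q ^ (D + 1) = ∏ c : ι, if c ∈ S then Q else 1 := by
        rw [Finset.prod_ite_mem, Finset.univ_inter, Finset.prod_const, hScard]
      have e4 : 3 ^ (D + 1) = ∏ c : ι, if c ∈ S then 3 else 1 := by
        rw [Finset.prod_ite_mem, Finset.univ_inter, Finset.prod_const, hScard]
      have e5 : Q ^ n = ∏ c : ι, Q := by rw [Finset.prod_const]; rfl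
      rw [e3, e4, e5, ← Finset.prod_mul_distrib, ← Finset.prod_mul_distrib]
      refine Finset.prod_congr rfl fun c _ => ?_
      split_ifs <;> ring
    calc _ ≤ _ := Nat.mul_le_mul_right _ e1
      _ = _ := e2
  have hcov : (Finset.univ : Finset (ι → ZMod Q)) ⊆
      (Finset.univ : Finset (Fin A)).biUnion fun j =>
        ((Finset.univ : Finset ι).powersetCard (D + 1)).biUnion fun S => bad j S := by
    intro ξ _
    obtain ⟨j, s, hs, hcard⟩ := hcon ξ
    obtain ⟨S, hSs, hS⟩ := Finset.exists_subset_card_eq (s := s) (n := D + 1) hcard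
    simp only [Finset.mem_biUnion, Finset.mem_univ, true_and, Finset.mem_powersetCard,
      Finset.subset_univ]
    refine ⟨j, S, hS, ?_⟩
    rw [Fintype.mem_piFinset]
    intro c
    split_ifs with hc
    · exact hs c (hSs hc)
    · exact Finset.mem_univ _
  have hcard : Q ^ n * Q ^ (D + 1) ≤ A * 2 ^ n * 3 ^ (D + 1) * Q ^ n := by
    have e1 := Finset.card_le_card hcov
    have e0 : (Finset.univ : Finset (ι → ZMod Q)).card = Q ^ n := by
      simp [n, ZMod.card]
    rw [e0] at e1
    calc Q ^ n * Q ^ (D + 1)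
        ≤ (∑ j : Fin A, ∑ S ∈ (Finset.univ : Finset ι).powersetCard (D + 1),
            (bad j S).card) * Q ^ (D + 1) := by
          refine Nat.mul_le_mul_right _ (e1.trans (Finset.card_biUnion_le.trans ?_))
          exact Finset.sum_le_sum fun j _ => Finset.card_biUnion_le
      _ = ∑ j : Fin A, ∑ S ∈ (Finset.univ : Finset ι).powersetCard (D + 1),
            (bad j S).card * Q ^ (D + 1) := by
          rw [Finset.sum_mul]
          exact Finset.sum_congr rfl fun j _ => Finset.sum_mul _ _ _
      _ ≤ ∑ j : Fin A, ∑ S ∈ (Finset.univ : Finset ι).powersetCard (D + 1),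
            3 ^ (D + 1) * Q ^ n :=
          Finset.sum_le_sum fun j _ => Finset.sum_le_sum fun S hS => hbad j S hS
      _ = A * (n.choose (D + 1)) * (3 ^ (D + 1) * Q ^ n) := by
          simp [Finset.card_powersetCard, n, mul_assoc]
      _ ≤ A * 2 ^ n * (3 ^ (D + 1) * Q ^ n) := by
          gcongr
          exact Nat.choose_le_two_pow n (D + 1)
      _ = _ := by ring
  have hQn : 0 < Q ^ n := pow_pos (NeZero.pos Q) n
  have := (Nat.mul_lt_mul_of_pos_right h hQn)
  change A * 2 ^ n * 3 ^ (D + 1) * Q ^ n < _ at this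
  rw [mul_comm (Q ^ n)] at hcard
  omega

/-! ### Inverse limits of finite entropy systems have zero mean dimension -/

lemma exists_cover_coverNum {k : ℕ} {X : Type*} [MetricSpace X] [CompactSpace X]
    {T : (Fin k → ℤ) → X → X} (hT : IsZkAction T) {N : ℕ} (hN : 1 ≤ N) {ε : ℝ} (hε : 0 < ε) :
    ∃ U : Fin (coverNum X (blockRho T dist N) ε) → Set X, (∀ i, IsOpen (U i)) ∧
      (⋃ i, U i) = Set.univ ∧ ∀ i, ∀ x ∈ U i, ∀ y ∈ U i, blockRho T dist N x y < ε := by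
  classical
  refine Nat.sInf_mem (s := {n : ℕ | ∃ U : Fin n → Set X, (∀ i, IsOpen (U i)) ∧
    (⋃ i, U i) = Set.univ ∧ ∀ i, ∀ x ∈ U i, ∀ y ∈ U i, blockRho T dist N x y < ε}) ?_
  let W : X → Set X := fun p => ⋂ a : Fin k → Fin N,
    {x | dist (T (fun i => (a i : ℤ)) x) (T (fun i => (a i : ℤ)) p) < ε / 2}
  have hW : ∀ p, IsOpen (W p) := fun p => isOpen_iInter_of_finite fun a =>
    isOpen_lt ((hT.cont _).dist continuous_const) continuous_const
  obtain ⟨s, hs⟩ := isCompact_univ.elim_finite_subcover W hW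
    (fun x _ => Set.mem_iUnion.2 ⟨x, Set.mem_iInter.2 fun a => by simp [hε]⟩)
  refine ⟨s.card, fun i => W (s.equivFin.symm i), fun i => hW _, ?_, ?_⟩
  · rw [Set.eq_univ_iff_forall]
    intro x
    have := hs (Set.mem_univ x)
    simp only [Set.mem_iUnion] at this
    obtain ⟨p, hp, hx⟩ := this
    exact Set.mem_iUnion.2 ⟨s.equivFin ⟨p, hp⟩, by simpa using hx⟩
  · intro i x hx y hy
    rw [blockRho_lt_iff T dist hN]
    intro a
    have h1 := Set.mem_iInter.1 hx a
    have h2 := Set.mem_iInter.1 hy a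
    simp only [Set.mem_ofPred_eq] at h1 h2
    have := dist_triangle_right (T (fun i => (a i : ℤ)) x) (T (fun i => (a i : ℤ)) y)
      (T (fun i => (a i : ℤ)) (s.equivFin.symm i).1)
    linarith

/-- Finite entropy forces small `widim`: the distance functions to a net, rounded by randomly
shifted staircases, have few non-integer coordinates simultaneously along every orbit. -/
lemma exists_widimLe_of_htop {k : ℕ} {Y : Type*} [MetricSpace Y] [CompactSpace Y]
    {S : (Fin k → ℤ) → Y → Y} (hS : IsZkAction S) (hfin : htop Y S < ⊤)
    {ε δ : ℝ} (hε : 0 < ε) (hδ : 0 < δ) :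
    ∃ N : ℕ, 1 ≤ N ∧ ∃ D : ℕ, (D : ℝ) ≤ δ * (N : ℝ) ^ k ∧ WidimLe Y (blockRho S dist N) ε D := by
  classical
  obtain ⟨t, ht⟩ := isCompact_univ.elim_finite_subcover (fun p : Y => Metric.ball p (ε / 4))
    (fun p => Metric.isOpen_ball)
    (fun x _ => Set.mem_iUnion.2 ⟨x, Metric.mem_ball_self (by positivity)⟩)
  have hnet : ∀ y : Y, ∃ p ∈ t, dist y p < ε / 4 := by
    intro y
    have := ht (Set.mem_univ y)
    simp only [Set.mem_iUnion] at this
    obtain ⟨p, hp, hx⟩ := this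
    exact ⟨p, hp, hx⟩
  obtain ⟨K, hK⟩ : ∃ K : ℝ, K = 8 / ε := ⟨_, rfl⟩
  have hK0 : 0 < K := by rw [hK]; positivity
  obtain ⟨h, hh⟩ : ∃ h : ℝ, h = (htop Y S).toReal := ⟨_, rfl⟩
  have hh0 : 0 ≤ h := hh ▸ ENNReal.toReal_nonneg
  obtain ⟨Q, hQ⟩ := exists_nat_ge (3 * Real.exp ((h + 1 + t.card) / δ))
  have hQ0 : (0 : ℝ) < Q := lt_of_lt_of_le (by positivity) hQ
  have hQ1 : 1 ≤ Q := by exact_mod_cast hQ0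
  have : NeZero Q := ⟨by omega⟩
  obtain ⟨ε1, hε1⟩ : ∃ e : ℝ, e = 1 / (Q * K) := ⟨_, rfl⟩
  have hε10 : 0 < ε1 := by rw [hε1]; positivity
  have hent : entScale Y S dist ε1 < ENNReal.ofReal (h + 1) := by
    have h1 : entScale Y S dist ε1 ≤ htop Y S :=
      le_iSup₂ (f := fun (ε : ℝ) (_ : 0 < ε) => entScale Y S dist ε) ε1 hε10
    refine lt_of_le_of_lt h1 ?_
    rw [ENNReal.lt_ofReal_iff_toReal_lt hfin.ne, ← hh]
    linarith
  unfold entScale at hent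
  simp only [iInf_lt_iff] at hent
  obtain ⟨N, hN, hlog⟩ := hent
  obtain ⟨A, hA⟩ : ∃ A, A = coverNum Y (blockRho S dist N) ε1 := ⟨_, rfl⟩
  have hNpos : (0 : ℝ) < (N : ℝ) ^ k := pow_pos (by exact_mod_cast hN) k
  have hlogA : Real.log A < (h + 1) * (N : ℝ) ^ k := by
    have e1 : ((N : ℝ≥0∞) ^ k) = ENNReal.ofReal ((N : ℝ) ^ k) := by
      rw [ENNReal.ofReal_pow (by positivity), ENNReal.ofReal_natCast]
    rw [← hA, e1, ← ENNReal.ofReal_div_of_pos hNpos, ENNReal.ofReal_lt_ofReal_iff (by linarith),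
      div_lt_iff₀ hNpos] at hlog
    exact hlog
  obtain ⟨D, hDdef⟩ : ∃ D, D = ⌊δ * (N : ℝ) ^ k⌋₊ := ⟨_, rfl⟩
  have hD1 : (D : ℝ) ≤ δ * (N : ℝ) ^ k := hDdef ▸ Nat.floor_le (by positivity)
  have hD2 : δ * (N : ℝ) ^ k < D + 1 := hDdef ▸ Nat.lt_floor_add_one _
  refine ⟨N, hN, D, hD1, ?_⟩
  let ι := t × (Fin k → Fin N)
  have hι : Fintype.card ι = t.card * N ^ k := by
    simp [ι]
  have hcount : A * 2 ^ Fintype.card ι * 3 ^ (D + 1) < Q ^ (D + 1) := by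
    rcases Nat.eq_zero_or_pos A with hA0 | hA0
    · rw [hA0, zero_mul, zero_mul]
      exact pow_pos hQ1 _
    have e0 : (0 : ℝ) < A := by exact_mod_cast hA0
    have e1 : (A : ℝ) < Real.exp ((h + 1) * (N : ℝ) ^ k) := by
      rw [← Real.exp_log e0]
      exact Real.exp_lt_exp.2 hlogA
    have e2 : (2 : ℝ) ^ Fintype.card ι ≤ Real.exp (t.card * (N : ℝ) ^ k) := by
      have : (2 : ℝ) ≤ Real.exp 1 := by linarith [Real.add_one_le_exp 1]
      calc (2 : ℝ) ^ Fintype.card ι ≤ Real.exp 1 ^ Fintype.card ι := by gcongr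
        _ = _ := by rw [← Real.exp_nat_mul, hι]; push_cast; ring_nf
    have e3 : (A : ℝ) * 2 ^ Fintype.card ι < Real.exp ((h + 1 + t.card) / δ) ^ (D + 1) := by
      calc (A : ℝ) * 2 ^ Fintype.card ι
          < Real.exp ((h + 1) * (N : ℝ) ^ k) * Real.exp (t.card * (N : ℝ) ^ k) :=
            mul_lt_mul e1 e2 (by positivity) (by positivity)
        _ = Real.exp ((h + 1 + t.card) / δ * (δ * (N : ℝ) ^ k)) := by
            rw [← Real.exp_add]; congr 1; field_simp
        _ ≤ Real.exp ((h + 1 + t.card) / δ * (D + 1)) := by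
            gcongr
        _ = _ := by rw [← Real.exp_nat_mul]; push_cast; ring_nf
    have e4 : (A : ℝ) * 2 ^ Fintype.card ι * 3 ^ (D + 1) < (Q : ℝ) ^ (D + 1) := by
      calc (A : ℝ) * 2 ^ Fintype.card ι * 3 ^ (D + 1)
          < Real.exp ((h + 1 + t.card) / δ) ^ (D + 1) * 3 ^ (D + 1) := by gcongr
        _ = (3 * Real.exp ((h + 1 + t.card) / δ)) ^ (D + 1) := by rw [← mul_pow, mul_comm]
        _ ≤ _ := by gcongr
    exact_mod_cast e4
  obtain ⟨U, hUo, hUc, hUd⟩ := exists_cover_coverNum hS hN hε10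
  subst hA
  let f : ι → Y → ℝ := fun c y => K * dist (S (fun i => (c.2 i : ℤ)) y) c.1
  have hfc : ∀ c, Continuous (f c) := fun c =>
    continuous_const.mul ((hS.cont _).dist continuous_const)
  -- On a cover element `Q * f c` oscillates by less than `1`, so its floor has three values.
  have hex : ∀ j c, ∃ b : ℤ, ∀ y ∈ U j, ⌊Q * f c y⌋ = b - 1 ∨ ⌊Q * f c y⌋ = b ∨
      ⌊Q * f c y⌋ = b + 1 := by
    intro j c
    rcases (U j).eq_empty_or_nonempty with he | ⟨y0, hy0⟩
    · exact ⟨0, by simp [he]⟩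
    refine ⟨⌊Q * f c y0⌋, fun y hy => ?_⟩
    have h1 := (blockRho_lt_iff S dist hN y y0 ε1).1 (hUd j y hy y0 hy0) c.2
    have h2 : |Q * f c y - Q * f c y0| < 1 := by
      have e1 := abs_dist_sub_le (S (fun i => (c.2 i : ℤ)) y) (S (fun i => (c.2 i : ℤ)) y0)
        (c.1 : Y)
      have e2 : Q * f c y - Q * f c y0 = (Q * K) *
          (dist (S (fun i => (c.2 i : ℤ)) y) c.1 - dist (S (fun i => (c.2 i : ℤ)) y0) c.1) := by
        simp only [f]; ring
      rw [e2, abs_mul, abs_of_pos (by positivity : (0 : ℝ) < Q * K)]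
      calc _ ≤ (Q * K) * dist (S (fun i => (c.2 i : ℤ)) y) (S (fun i => (c.2 i : ℤ)) y0) := by
            gcongr
        _ < (Q * K) * ε1 := by gcongr
        _ = 1 := by rw [hε1]; field_simp
    rw [abs_lt] at h2
    have a1 := Int.floor_le (Q * f c y)
    have a2 := Int.lt_floor_add_one (Q * f c y)
    have a3 := Int.floor_le (Q * f c y0)
    have a4 := Int.lt_floor_add_one (Q * f c y0)
    have a5 : ((⌊Q * f c y⌋ : ℤ) : ℝ) < ((⌊Q * f c y0⌋ + 2 : ℤ) : ℝ) := by push_cast; linarith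
    have a6 : ((⌊Q * f c y0⌋ : ℤ) : ℝ) < ((⌊Q * f c y⌋ + 2 : ℤ) : ℝ) := by push_cast; linarith
    have a7 := Int.cast_lt.1 a5
    have a8 := Int.cast_lt.1 a6
    omega
  choose b hb using hex
  obtain ⟨ξ, hξ⟩ := exists_pick _ Q D
    (fun j c => ({((b j c - 1 : ℤ) : ZMod Q), ((b j c : ℤ) : ZMod Q),
      ((b j c + 1 : ℤ) : ZMod Q)} : Finset (ZMod Q))) (fun j c => Finset.card_le_three) hcount
  obtain ⟨R, hR⟩ : ∃ R : ℝ, ∀ c y, |f c y| ≤ R := by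
    have h1 : ∀ c : ι, ∃ R : ℝ, ∀ y, |f c y| ≤ R := by
      intro c
      obtain ⟨R, hR⟩ := isCompact_univ.exists_bound_of_continuousOn (hfc c).continuousOn
      exact ⟨R, fun y => hR y (Set.mem_univ _)⟩
    choose R hR using h1
    refine ⟨∑ c, |R c|, fun c y => (hR c y).trans ((le_abs_self _).trans ?_)⟩
    exact Finset.single_le_sum (f := fun c => |R c|) (fun c _ => abs_nonneg _) (Finset.mem_univ c)
  obtain ⟨B, hB⟩ := exists_nat_ge (R + 1)
  have hst : ∀ c y, |stairQ Q (ξ c).val (f c y) - f c y| ≤ 1 := fun c y =>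
    abs_stairQ_sub_le (ZMod.val_lt _) _
  refine widimLe_of_few_nonint _ ε D (ι := ι) (fun y c => stairQ Q (ξ c).val (f c y))
    (fun c => (continuous_stairQ hQ1 _).comp (hfc c)) B ?_ ?_ ?_
  · intro y c
    have h1 := abs_le.1 (hst c y)
    have h2 := abs_le.1 (hR c y)
    rw [abs_le]
    constructor <;> linarith
  · intro y s hs
    have hy : y ∈ ⋃ i, U i := hUc ▸ Set.mem_univ y
    obtain ⟨j, hj⟩ := Set.mem_iUnion.1 hy
    refine hξ j s fun c hc => ?_
    have h1 := floor_mod_of_stairQ_nonint (ξ c) (f c y) (hs c hc)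
    rw [← h1]
    rcases hb j c y hj with e | e | e <;> simp [e]
  · intro x y hxy
    rw [blockRho_lt_iff S dist hN]
    intro a
    obtain ⟨p, hp, hxp⟩ := hnet (S (fun i => (a i : ℤ)) x)
    have h1 := abs_lt.1 (hxy (⟨p, hp⟩, a))
    have h2 := abs_le.1 (hst (⟨p, hp⟩, a) x)
    have h3 := abs_le.1 (hst (⟨p, hp⟩, a) y)
    have h4 : f (⟨p, hp⟩, a) y - f (⟨p, hp⟩, a) x < 4 := by linarith
    have h5 : K * (dist (S (fun i => (a i : ℤ)) y) p - dist (S (fun i => (a i : ℤ)) x) p) < 4 := by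
      rw [mul_sub]; exact h4
    have h6 : dist (S (fun i => (a i : ℤ)) y) p - dist (S (fun i => (a i : ℤ)) x) p < ε / 2 := by
      have e : ε / 2 = 4 / K := by rw [hK]; field_simp; norm_num
      rw [e, lt_div_iff₀ hK0, mul_comm]
      exact h5
    have h7 := dist_triangle_right (S (fun i => (a i : ℤ)) x) (S (fun i => (a i : ℤ)) y) p
    linarith

/-- Compactness: an increasing family of open relations that eventually separates any two distinct
points separates all `ε`-distant pairs at one stage. -/
lemma exists_separating_stage {X : Type*} [MetricSpace X] [CompactSpace X] (O : ℕ → Set (X × X))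
    (ho : ∀ s, IsOpen (O s)) (hm : Monotone O) (hsep : ∀ x y, x ≠ y → ∃ s, (x, y) ∈ O s)
    {ε : ℝ} (hε : 0 < ε) : ∃ s, ∀ x y, ε ≤ dist x y → (x, y) ∈ O s := by
  have hC : IsCompact {z : X × X | ε ≤ dist z.1 z.2} :=
    (isClosed_le continuous_const (continuous_fst.dist continuous_snd)).isCompact
  obtain ⟨s, hs⟩ := hC.elim_directed_cover O ho (by
    rintro ⟨x, y⟩ hxy
    have hne : x ≠ y := by
      rintro rfl
      simp at hxy
      linarith
    exact Set.mem_iUnion.2 (hsep x y hne)) hm.directed_le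
  exact ⟨s, fun x y h => hs h⟩

lemma mdim_eq_zero_of_inverseLimit {k : ℕ} {X : Type*} [MetricSpace X] [CompactSpace X]
    {T : (Fin k → ℤ) → X → X} (Y : ℕ → ZkSystem k)
    (p : ∀ n, (Y (n + 1)).carrier → (Y n).carrier)
    (hent : ∀ n, htop (Y n).carrier (Y n).act < ⊤)
    (φ : X ≃ₜ {x : ∀ n, (Y n).carrier // ∀ n, p n (x (n + 1)) = x n})
    (hφ : ∀ (g : Fin k → ℤ) (x : X) (n : ℕ), (φ (T g x)).val n = (Y n).act g ((φ x).val n)) :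
    mdim X T = 0 := by
  let π : ∀ n, X → (Y n).carrier := fun n x => (φ x).val n
  have hπc : ∀ n, Continuous (π n) := fun n =>
    (continuous_apply n).comp (continuous_subtype_val.comp φ.continuous)
  have hππ : ∀ n x, p n (π (n + 1) x) = π n x := fun n x => (φ x).2 n
  have hsep : ∀ ε : ℝ, 0 < ε → ∃ n, ∃ ε' : ℝ, 0 < ε' ∧
      ∀ x y, dist (π n x) (π n y) < ε' → dist x y < ε := by
    intro ε hε
    obtain ⟨n, hn⟩ := exists_separating_stage (fun n => {z : X × X | π n z.1 ≠ π n z.2})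
      (fun n => isOpen_ne_fun ((hπc n).comp continuous_fst) ((hπc n).comp continuous_snd))
      (monotone_nat_of_le_succ fun n z hz hcon => hz (by
        rw [← hππ n z.1, ← hππ n z.2, hcon]))
      (by
        intro x y hxy
        by_contra hcon
        push Not at hcon
        exact hxy (φ.injective (Subtype.ext (funext fun n => by
          simpa using hcon n)))) hε
    obtain ⟨j, hj⟩ := exists_separating_stage
      (fun j : ℕ => {z : X × X | dist z.1 z.2 < ε ∨ 1 / ((j : ℝ) + 1) < dist (π n z.1) (π n z.2)})
      (fun j => (isOpen_lt (continuous_fst.dist continuous_snd) continuous_const).union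
        (isOpen_lt continuous_const
          (((hπc n).comp continuous_fst).dist ((hπc n).comp continuous_snd))))
      (by
        intro i j hij z hz
        refine hz.imp id fun hz => lt_of_le_of_lt ?_ hz
        exact Nat.one_div_le_one_div hij)
      (by
        intro x y hxy
        rcases lt_or_ge (dist x y) ε with h | h
        · exact ⟨0, Or.inl h⟩
        · obtain ⟨j, hj⟩ := exists_nat_one_div_lt (dist_pos.2 (hn x y h))
          exact ⟨j, Or.inr hj⟩) hε
    refine ⟨n, 1 / ((j : ℝ) + 1), by positivity, fun x y hxy => ?_⟩
    by_contra hcon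
    rcases hj x y (not_lt.1 hcon) with h | h
    · exact hcon h
    · exact absurd hxy (not_lt.2 h.le)
  unfold mdim
  simp only [ENNReal.iSup_eq_zero]
  intro ε hε
  obtain ⟨n, ε', hε', hn⟩ := hsep ε hε
  refine le_antisymm (ENNReal.le_of_forall_pos_le_add fun δ hδ _ => ?_) bot_le
  obtain ⟨N, hN, D, hD, m, P, hP1, hP2, f, hf1, hf2⟩ :=
    exists_widimLe_of_htop (Y n).isAction (hent n) hε' (NNReal.coe_pos.2 hδ)
  have hW : WidimLe X (blockRho T dist N) ε D := by
    refine ⟨m, P, hP1, hP2, f ∘ π n, hf1.comp (hπc n), fun x y hxy => ?_⟩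
    have h1 := (blockRho_lt_iff _ _ hN _ _ _).1 (hf2 _ _ hxy)
    rw [blockRho_lt_iff T dist hN]
    intro a
    refine hn _ _ ?_
    have := h1 a
    simp only [π, hφ]
    exact this
  refine (iInf₂_le N hN).trans ?_
  rw [zero_add]
  refine ENNReal.div_le_of_le_mul ?_
  have h1 : ((widim X (blockRho T dist N) ε : ℕ) : ℝ≥0∞) ≤ (D : ℝ≥0∞) := by
    exact_mod_cast widim_le_of_widimLe hW
  refine h1.trans ?_
  have h2 : (D : ℝ≥0) ≤ δ * (N : ℝ≥0) ^ k := by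
    exact_mod_cast hD
  exact_mod_cast h2

/-! ### Sets of small orbit capacity -/

/-- The box `{0, …, L-1}^k` in `ℤ^k`. -/
noncomputable def box (k L : ℕ) : Finset (Fin k → ℤ) := Fintype.piFinset fun _ => Finset.Ico 0 (L : ℤ)

lemma mem_box {k L : ℕ} {m : Fin k → ℤ} : m ∈ box k L ↔ ∀ i, 0 ≤ m i ∧ m i < L := by
  simp [box]

lemma card_box (k L : ℕ) : (box k L).card = L ^ k := by
  simp [box]

/-- Every orbit visits `E` at most `δ L^k` times in a window of size `L`. -/
def CapLe {k : ℕ} {X : Type*} (T : (Fin k → ℤ) → X → X) (E : Set X) (δ : ℝ) (L : ℕ) : Prop :=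
  ∀ x, ∀ s : Finset (Fin k → ℤ), s ⊆ box k L → (∀ m ∈ s, T m x ∈ E) →
    (s.card : ℝ) ≤ δ * (L : ℝ) ^ k

/-- `E` has zero orbit capacity. -/
def SmallSet {k : ℕ} {X : Type*} (T : (Fin k → ℤ) → X → X) (E : Set X) : Prop :=
  ∀ δ : ℝ, 0 < δ → ∃ L : ℕ, 1 ≤ L ∧ CapLe T E δ L

section Cap

variable {k : ℕ} {X : Type*} {T : (Fin k → ℤ) → X → X} {E E' : Set X} {δ δ' : ℝ} {L L' : ℕ}

lemma CapLe.mono (h : CapLe T E δ L) (hE : E' ⊆ E) : CapLe T E' δ L :=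
  fun x s hs hm => h x s hs fun m hm' => hE (hm m hm')

lemma CapLe.mono_const (h : CapLe T E δ L) (hd : δ ≤ δ') : CapLe T E δ' L :=
  fun x s hs hm => (h x s hs hm).trans (by gcongr)

lemma CapLe.mul [TopologicalSpace X] (hT : IsZkAction T) (h : CapLe T E δ L) (hL : 1 ≤ L)
    (q : ℕ) : CapLe T E δ (L * q) := by
  classical
  intro x s hs hm
  have hL0 : (0 : ℤ) < L := by exact_mod_cast hL
  let c : (Fin k → ℤ) → (Fin k → ℤ) := fun m i => m i / L
  have hc : ∀ m ∈ s, c m ∈ box k q := by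
    intro m hms
    rw [mem_box]
    intro i
    have h1 := mem_box.1 (hs hms) i
    refine ⟨Int.ediv_nonneg h1.1 hL0.le, ?_⟩
    refine Int.ediv_lt_of_lt_mul hL0 ?_
    have := h1.2
    push_cast at this
    linarith [mul_comm (L : ℤ) q]
  rw [Finset.card_eq_sum_card_fiberwise (f := c) (t := box k q) hc]
  have hfib : ∀ d ∈ box k q, (((s.filter fun m => c m = d).card : ℕ) : ℝ) ≤ δ * (L : ℝ) ^ k := by
    intro d _
    let s' := (s.filter fun m => c m = d).image fun m => m - (fun i => L * d i)
    have hcard : s'.card = (s.filter fun m => c m = d).card :=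
      Finset.card_image_of_injective _ (sub_left_injective)
    rw [← hcard]
    refine h (T (fun i => L * d i) x) s' ?_ ?_
    · intro m' hm'
      obtain ⟨m, hm1, rfl⟩ := Finset.mem_image.1 hm'
      obtain ⟨hm2, hm3⟩ := Finset.mem_filter.1 hm1
      rw [mem_box]
      intro i
      have e1 : m i / L = d i := congrFun hm3 i
      have e2 := Int.emod_nonneg (m i) hL0.ne'
      have e3 := Int.emod_lt_of_pos (m i) hL0
      have e4 := Int.emod_add_mul_ediv (m i) L
      rw [e1] at e4
      simp only [Pi.sub_apply]
      constructor <;> linarith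
    · intro m' hm'
      obtain ⟨m, hm1, rfl⟩ := Finset.mem_image.1 hm'
      rw [← hT.map_add, sub_add_cancel]
      exact hm m (Finset.mem_filter.1 hm1).1
  calc _ = ∑ d ∈ box k q, (((s.filter fun m => c m = d).card : ℕ) : ℝ) := by push_cast; rfl
    _ ≤ ∑ d ∈ box k q, δ * (L : ℝ) ^ k := Finset.sum_le_sum hfib
    _ = _ := by
      rw [Finset.sum_const, card_box, nsmul_eq_mul]; push_cast; rw [mul_pow]; ring

lemma CapLe.union [TopologicalSpace X] (hT : IsZkAction T) (h : CapLe T E δ L) (hL : 1 ≤ L)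
    (h' : CapLe T E' δ' L') (hL' : 1 ≤ L') : CapLe T (E ∪ E') (δ + δ') (L * L') := by
  classical
  intro x s hs hm
  have h1 := h.mul hT hL L' x (s.filter fun m => T m x ∈ E)
    ((Finset.filter_subset _ _).trans hs) (fun m hm => (Finset.mem_filter.1 hm).2)
  have h2 := h'.mul hT hL' L x (s.filter fun m => ¬ T m x ∈ E)
    ((Finset.filter_subset _ _).trans (by rwa [mul_comm])) (fun m hm' => by
      obtain ⟨a, b⟩ := Finset.mem_filter.1 hm'
      exact (hm m a).resolve_left b)
  have h3 := Finset.card_filter_add_card_filter_not (s := s) (fun m => T m x ∈ E)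
  have h4 : (s.card : ℝ) = ((s.filter fun m => T m x ∈ E).card : ℝ) +
      ((s.filter fun m => ¬ T m x ∈ E).card : ℝ) := by exact_mod_cast h3.symm
  rw [mul_comm L' L] at h2
  linarith [add_mul δ δ' (((L * L' : ℕ) : ℝ) ^ k)]

lemma SmallSet.mono (h : SmallSet T E) (hE : E' ⊆ E) : SmallSet T E' := fun δ hδ =>
  let ⟨L, hL, h'⟩ := h δ hδ
  ⟨L, hL, h'.mono hE⟩

lemma smallSet_empty : SmallSet T (∅ : Set X) := fun δ hδ => ⟨1, le_rfl, fun x s _ hm => by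
  have : s = ∅ := Finset.eq_empty_of_forall_notMem fun m h => hm m h
  rw [this]
  simp [hδ.le]⟩

lemma SmallSet.union [TopologicalSpace X] (hT : IsZkAction T) (h : SmallSet T E)
    (h' : SmallSet T E') : SmallSet T (E ∪ E') := fun δ hδ => by
  obtain ⟨L, hL, h1⟩ := h (δ / 2) (by positivity)
  obtain ⟨L', hL', h2⟩ := h' (δ / 2) (by positivity)
  exact ⟨L * L', Nat.mul_pos hL hL', (h1.union hT hL h2 hL').mono_const (by linarith)⟩

lemma SmallSet.biUnion [TopologicalSpace X] (hT : IsZkAction T) {ι : Type*} (I : Finset ι)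
    (F : ι → Set X) (h : ∀ i ∈ I, SmallSet T (F i)) : SmallSet T (⋃ i ∈ I, F i) := by
  classical
  induction I using Finset.induction_on with
  | empty => simpa using smallSet_empty
  | insert a s ha ih =>
    rw [Finset.set_biUnion_insert]
    exact (h a (Finset.mem_insert_self _ _)).union hT
      (ih fun i hi => h i (Finset.mem_insert_of_mem hi))

/-- The capacity bound of a closed set persists on a neighbourhood. -/
lemma CapLe.thicken [TopologicalSpace X] [CompactSpace X] (hT : IsZkAction T) (θ : X → ℝ)
    (hθ : Continuous θ) (hθ0 : ∀ x, 0 ≤ θ x) (h : CapLe T {x | θ x = 0} δ L) :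
    ∃ w : ℝ, 0 < w ∧ CapLe T {x | θ x ≤ w} δ L := by
  classical
  rcases isEmpty_or_nonempty X with hX | hX
  · exact ⟨1, one_pos, fun x => (hX.false x).elim⟩
  have key : ∀ s : Finset (Fin k → ℤ), ∃ c : ℝ, 0 < c ∧ (s ⊆ box k L → δ * (L : ℝ) ^ k < s.card →
      ∀ x, c ≤ ∑ m ∈ s, θ (T m x)) := by
    intro s
    by_cases hs : s ⊆ box k L ∧ δ * (L : ℝ) ^ k < s.card
    swap
    · exact ⟨1, one_pos, fun h1 h2 => (hs ⟨h1, h2⟩).elim⟩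
    have hcont : Continuous fun x => ∑ m ∈ s, θ (T m x) :=
      continuous_finsetSum _ fun m _ => hθ.comp (hT.cont m)
    obtain ⟨x0, _, hx0⟩ := isCompact_univ.exists_isMinOn Set.univ_nonempty hcont.continuousOn
    refine ⟨∑ m ∈ s, θ (T m x0), ?_, fun _ _ x => hx0 (Set.mem_univ x)⟩
    by_contra hcon
    have h0 : ∑ m ∈ s, θ (T m x0) = 0 :=
      le_antisymm (not_lt.1 hcon) (Finset.sum_nonneg fun m _ => hθ0 _)
    rw [Finset.sum_eq_zero_iff_of_nonneg fun m _ => hθ0 _] at h0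
    exact absurd (h x0 s hs.1 h0) (not_le.2 hs.2)
  choose c hc0 hc using key
  obtain ⟨c0, hc00, hc0'⟩ : ∃ c0 : ℝ, 0 < c0 ∧ ∀ s ∈ (box k L).powerset, c0 ≤ c s := by
    have hne : (box k L).powerset.Nonempty := ⟨∅, by simp⟩
    obtain ⟨s0, _, hs0⟩ := Finset.exists_min_image (box k L).powerset c hne
    exact ⟨c s0, hc0 s0, hs0⟩
  refine ⟨c0 / ((L : ℝ) ^ k + 1), by positivity, fun x s hs hm => ?_⟩
  by_contra hcon
  have h1 := (hc0' s (Finset.mem_powerset.2 hs)).trans (hc s hs (not_le.1 hcon) x)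
  have h2 : ∑ m ∈ s, θ (T m x) ≤ s.card * (c0 / ((L : ℝ) ^ k + 1)) := by
    rw [← nsmul_eq_mul]
    exact Finset.sum_le_card_nsmul _ _ _ fun m hm' => hm m hm'
  have h3 : (s.card : ℝ) ≤ (L : ℝ) ^ k := by
    have := Finset.card_le_card hs
    rw [card_box] at this
    exact_mod_cast this
  have h4 : (s.card : ℝ) * (c0 / ((L : ℝ) ^ k + 1)) < c0 := by
    have hpos : (0 : ℝ) < (L : ℝ) ^ k + 1 := by positivity
    rw [mul_div_assoc', div_lt_iff₀ hpos]
    nlinarith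
  linarith

end Cap

/-! ### Generic maps out of a finite complex -/

/-- The values that a smooth map takes on a `D`-dimensional simplex miss a dense set of targets in
any space of dimension greater than `D`. -/
lemma dense_compl_image_convexHull {E F : Type*} [NormedAddCommGroup E] [NormedSpace ℝ E]
    [FiniteDimensional ℝ E] [NormedAddCommGroup F] [NormedSpace ℝ F] [FiniteDimensional ℝ F]
    (s : Finset E) (hs : s.Nonempty) (H : E → F) (hH : ContDiff ℝ 1 H)
    (hcard : s.card ≤ Module.finrank ℝ F) :
    Dense (H '' convexHull ℝ (s : Set E))ᶜ := by
  classical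
  obtain ⟨v0, hv0⟩ := hs
  let φ : (↥(s.erase v0) → ℝ) → E := fun c => v0 + ∑ v, c v • ((v : E) - v0)
  have hφ : ContDiff ℝ 1 φ := by
    refine contDiff_const.add (ContDiff.sum fun v _ => ?_)
    exact (contDiff_apply ℝ ℝ v).smul contDiff_const
  have hd := (hH.comp hφ).dense_compl_range_of_finrank_lt_finrank (by
    rw [Module.finrank_fintype_fun_eq_card, Fintype.card_coe, Finset.card_erase_of_mem hv0]
    have := Finset.card_pos.2 ⟨v0, hv0⟩
    omega)
  refine hd.mono (Set.compl_subset_compl.2 ?_)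
  rintro _ ⟨p, hp, rfl⟩
  obtain ⟨w, _, hw1, hw2⟩ := Finset.mem_convexHull'.1 hp
  refine ⟨fun v => w v, ?_⟩
  simp only [Function.comp]
  congr 1
  have e1 : ∑ v : ↥(s.erase v0), w v • ((v : E) - v0) = ∑ v ∈ s, w v • (v - v0) := by
    rw [Finset.sum_coe_sort (s.erase v0) (fun v => w v • (v - v0)),
      ← Finset.add_sum_erase s _ hv0]
    simp
  simp only [φ]
  rw [e1]
  simp only [smul_sub]
  rw [Finset.sum_sub_distrib, hw2, ← Finset.sum_smul, hw1]
  simp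

/-- General position: functions that are nearly constant on the fibres of a map to a complex of
dimension `D` can be perturbed so that at each point at most `D` of them take the value `t`. -/
lemma exists_generic {X : Type*} [TopologicalSpace X] [CompactSpace X] {m D : ℕ}
    (P : Geometry.SimplicialComplex ℝ (EuclideanSpace ℝ (Fin m)))
    (hPfin : P.faces.Finite) (hPcard : ∀ s ∈ P.faces, s.card ≤ D + 1)
    (F : X → EuclideanSpace ℝ (Fin m)) (hF : Continuous F) (hFP : ∀ x, F x ∈ P.space)
    {ι : Type*} [Fintype ι] (f : ι → X → ℝ) (hf : ∀ a, Continuous (f a)) {η : ℝ} (hη : 0 < η)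
    (hfib : ∀ x y, F x = F y → ∀ a, |f a x - f a y| < η) (t : ℝ) :
    ∃ G : X → ι → ℝ, Continuous G ∧ (∀ x a, |G x a - f a x| ≤ 2 * η) ∧
      ∀ x (s : Finset ι), (∀ a ∈ s, G x a = t) → s.card ≤ D := by
  classical
  obtain ⟨H, hH⟩ := exists_contMDiffMap_forall_mem_convex_of_local_const (n := 1)
    (modelWithCornersSelf ℝ (EuclideanSpace ℝ (Fin m))) (F := ι → ℝ)
    (t := fun p => {c : ι → ℝ | ∀ x a, F x = p → |c a - f a x| ≤ η})
    (by
      intro p c hc d hd α β hα hβ hαβ x a hx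
      have h1 := abs_le.1 (hc x a hx)
      have h2 := abs_le.1 (hd x a hx)
      simp only [Pi.add_apply, Pi.smul_apply, smul_eq_mul]
      have e : α * c a + β * d a - f a x = α * (c a - f a x) + β * (d a - f a x) := by
        linear_combination (f a x) * hαβ
      rw [e, abs_le]
      constructor <;> nlinarith)
    (by
      intro p
      have key : ∀ c : ι → ℝ, (∀ x, F x = p → ∀ a, |c a - f a x| < η) →
          ∀ᶠ q in 𝓝 p, c ∈ {c : ι → ℝ | ∀ x a, F x = q → |c a - f a x| ≤ η} := by
        intro c hc
        have hC : IsClosed (F '' {x | ∃ a, η ≤ |c a - f a x|}) := by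
          refine (IsCompact.image ?_ hF).isClosed
          refine IsClosed.isCompact ?_
          have : {x | ∃ a, η ≤ |c a - f a x|} = ⋃ a, {x | η ≤ |c a - f a x|} := by
            ext; simp
          rw [this]
          exact isClosed_iUnion_of_finite fun a =>
            isClosed_le continuous_const (continuous_const.sub (hf a)).abs
        have hp : p ∉ F '' {x | ∃ a, η ≤ |c a - f a x|} := by
          rintro ⟨x, ⟨a, ha⟩, hx⟩
          exact absurd (hc x hx a) (not_lt.2 ha)
        filter_upwards [hC.isOpen_compl.mem_nhds hp] with q hq x a hx
        by_contra hcon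
        exact hq ⟨x, ⟨a, (not_le.1 hcon).le⟩, hx⟩
      by_cases hp : ∃ x0, F x0 = p
      · obtain ⟨x0, hx0⟩ := hp
        exact ⟨fun a => f a x0, key _ fun x hx a => hfib x0 x (hx0.trans hx.symm) a⟩
      · exact ⟨0, key _ fun x hx => (hp ⟨x, hx⟩).elim⟩)
  have hHs : ContDiff ℝ 1 H := contMDiff_iff_contDiff.1 H.contMDiff
  have : Finite P.faces := hPfin
  let idx := P.faces × {S : Finset ι // S.card = D + 1}
  let r : ∀ S : Finset ι, (ι → ℝ) →ₗ[ℝ] (S → ℝ) := fun S =>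
    LinearMap.funLeft ℝ ℝ (Subtype.val : S → ι)
  let Hs : ∀ S : Finset ι, EuclideanSpace ℝ (Fin m) → (S → ℝ) := fun S p a => t - H p a
  have hHsd : ∀ S, ContDiff ℝ 1 (Hs S) := by
    intro S
    rw [contDiff_pi]
    intro a
    exact contDiff_const.sub ((contDiff_apply ℝ ℝ (a : ι)).comp hHs)
  let O : idx → Set (ι → ℝ) := fun j =>
    r j.2.1 ⁻¹' (Hs j.2.1 '' convexHull ℝ ((j.1 : Finset (EuclideanSpace ℝ (Fin m))) :
      Set (EuclideanSpace ℝ (Fin m))))ᶜ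
  have hOo : ∀ j, IsOpen (O j) := by
    intro j
    refine IsOpen.preimage (LinearMap.continuous_of_finiteDimensional _) ?_
    rw [isOpen_compl_iff]
    exact (((Finset.finite_toSet _).isCompact_convexHull (𝕜 := ℝ)).image (hHsd _).continuous).isClosed
  have hOd : ∀ j, Dense (O j) := by
    intro j
    refine Dense.preimage ?_ (LinearMap.isOpenMap_of_finiteDimensional _
      (LinearMap.funLeft_surjective_of_injective _ _ _ Subtype.val_injective))
    refine dense_compl_image_convexHull _ (P.nonempty_of_mem_faces j.1.2) _ (hHsd _) ?_
    rw [Module.finrank_fintype_fun_eq_card, Fintype.card_coe, j.2.2]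
    exact hPcard _ j.1.2
  have hdense := dense_iInter_of_isOpen hOo hOd
  obtain ⟨ξ, hξ1, hξ2⟩ := hdense.exists_mem_open Metric.isOpen_ball
    ⟨(0 : ι → ℝ), Metric.mem_ball_self hη⟩
  refine ⟨fun x a => H (F x) a + ξ a, ?_, ?_, ?_⟩
  · refine continuous_pi fun a => ?_
    exact ((continuous_apply a).comp (hHs.continuous.comp hF)).add continuous_const
  · intro x a
    have h1 := abs_le.1 (hH (F x) x a rfl)
    have h2 : |ξ a| < η := by
      have := (norm_le_pi_norm ξ a).trans_lt (mem_ball_zero_iff.1 hξ2)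
      simpa using this
    rw [abs_lt] at h2
    rw [abs_le]
    constructor <;> linarith
  · intro x s hs
    by_contra hcon
    obtain ⟨S, hSs, hS⟩ := Finset.exists_subset_card_eq (s := s) (n := D + 1) (by omega)
    obtain ⟨σ, hσ, hxσ⟩ := P.mem_space_iff.1 (hFP x)
    have := Set.mem_iInter.1 hξ1 (⟨σ, hσ⟩, ⟨S, hS⟩)
    refine this ⟨F x, hxσ, ?_⟩
    funext a
    have := hs a (hSs a.2)
    simp only [Hs, r, LinearMap.funLeft_apply]
    linarith

/-! ### Contracted power diagrams in `ℝ^k` -/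

/-- The power distance from `w` to the site `n`, whose weight is `-A * a n`. -/
def pow2 {k : ℕ} (a : (Fin k → ℤ) → ℝ) (A : ℝ) (n : Fin k → ℤ) (w : Fin k → ℝ) : ℝ :=
  ∑ i, (w i - n i) ^ 2 + A * a n

/-- `n` is a nearest site of `w` for the power distance. -/
def IsNearest {k : ℕ} (a : (Fin k → ℤ) → ℝ) (A : ℝ) (n : Fin k → ℤ) (w : Fin k → ℝ) : Prop :=
  ∀ n', pow2 a A n w ≤ pow2 a A n' w

section Geometry

variable {k : ℕ} {a : (Fin k → ℤ) → ℝ} {R B : ℕ}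

lemma exists_pow2_le (hR : ∀ m : Fin k → ℤ, ∃ n, (∀ i, |n i - m i| ≤ R) ∧ a n = 0)
    (hB : B = k * (R + 1) ^ 2) (A : ℝ) (w : Fin k → ℝ) : ∃ n, pow2 a A n w ≤ B := by
  obtain ⟨n, hn, ha⟩ := hR fun i => ⌊w i⌋
  refine ⟨n, ?_⟩
  have h1 : ∀ i, (w i - n i) ^ 2 ≤ ((R : ℝ) + 1) ^ 2 := by
    intro i
    have h2 := abs_le.1 (hn i)
    have h3 : (-(R : ℝ)) ≤ (n i : ℝ) - ⌊w i⌋ := by exact_mod_cast h2.1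
    have h4 : (n i : ℝ) - ⌊w i⌋ ≤ R := by exact_mod_cast h2.2
    have h5 := Int.floor_le (w i)
    have h6 := Int.lt_floor_add_one (w i)
    refine sq_le_sq' ?_ ?_ <;> linarith
  unfold pow2
  rw [ha, mul_zero, add_zero, hB]
  calc _ ≤ ∑ _i : Fin k, ((R : ℝ) + 1) ^ 2 := Finset.sum_le_sum fun i _ => h1 i
    _ = _ := by simp

lemma abs_sub_le_of_pow2_le (ha0 : ∀ n, 0 ≤ a n) (hB1 : 1 ≤ B) {A : ℝ} (hA : 0 ≤ A)
    {n : Fin k → ℤ} {w : Fin k → ℝ} (h : pow2 a A n w ≤ B) (i : Fin k) : |w i - n i| ≤ B := by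
  have h1 : (w i - n i) ^ 2 ≤ ∑ i, (w i - n i) ^ 2 :=
    Finset.single_le_sum (f := fun i => (w i - n i) ^ 2) (fun i _ => sq_nonneg _)
      (Finset.mem_univ i)
  have h2 : 0 ≤ A * a n := mul_nonneg hA (ha0 n)
  have h3 : (1 : ℝ) ≤ B := by exact_mod_cast hB1
  unfold pow2 at h
  refine abs_le_of_sq_le_sq ?_ (by positivity)
  nlinarith

lemma exists_isNearest (ha0 : ∀ n, 0 ≤ a n) (hB1 : 1 ≤ B)
    (hR : ∀ m : Fin k → ℤ, ∃ n, (∀ i, |n i - m i| ≤ R) ∧ a n = 0)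
    (hB : B = k * (R + 1) ^ 2) {A : ℝ} (hA : 0 ≤ A) (w : Fin k → ℝ) :
    ∃ n, IsNearest a A n w ∧ pow2 a A n w ≤ B := by
  classical
  obtain ⟨n0, hn0⟩ := exists_pow2_le hR hB A w
  let I : Finset (Fin k → ℤ) :=
    Fintype.piFinset fun i => Finset.Icc ⌊w i - B⌋ ⌈w i + B⌉
  have hI : ∀ n, pow2 a A n w ≤ B → n ∈ I := by
    intro n hn
    rw [Fintype.mem_piFinset]
    intro i
    have h1 := abs_le.1 (abs_sub_le_of_pow2_le ha0 hB1 hA hn i)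
    rw [Finset.mem_Icc]
    constructor
    · have : ((⌊w i - B⌋ : ℤ) : ℝ) ≤ n i := (Int.floor_le _).trans (by linarith)
      exact_mod_cast this
    · have : (n i : ℝ) ≤ ((⌈w i + B⌉ : ℤ) : ℝ) := le_trans (by linarith) (Int.le_ceil _)
      exact_mod_cast this
  obtain ⟨n, hnI, hn⟩ := Finset.exists_min_image I (fun n => pow2 a A n w) ⟨n0, hI n0 hn0⟩
  have hnB : pow2 a A n w ≤ B := (hn n0 (hI n0 hn0)).trans hn0
  refine ⟨n, fun n' => ?_, hnB⟩
  by_cases h : pow2 a A n' w ≤ B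
  · exact hn n' (hI n' h)
  · exact hnB.trans (not_le.1 h).le

/-- Contracting a cell of the power diagram towards its site by a factor `l < 1` creates a
definite gap, linear in the distance between sites, provided nearby sites have large weight. -/
lemma gap_of_isNearest (hk : 1 ≤ k) (ha0 : ∀ n, 0 ≤ a n) (ha1 : ∀ n, a n ≤ 1)
    (hB1 : 1 ≤ B) {M κ l A A' : ℝ} (hκ : 0 ≤ κ) (hl0 : 0 < l) (hl1 : l ≤ 1)
    (hMκ : κ * k ≤ (1 - l) * M) (hAA : A = l * A')
    (hA : B + k * (2 * B + κ) ^ 2 ≤ A)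
    (hsep : ∀ n n', a n < 1 → a n' < 1 → n ≠ n' → ∃ i, M ≤ |(n' i : ℝ) - n i|)
    {n : Fin k → ℤ} {w : Fin k → ℝ} (hn : IsNearest a A' n w) (hnB : pow2 a A' n w ≤ B)
    (n' : Fin k → ℤ) (hne : n' ≠ n) :
    κ * ∑ i, |(n' i : ℝ) - n i| ≤ pow2 a A n' (fun i => n i + l * (w i - n i)) -
      pow2 a A n (fun i => n i + l * (w i - n i)) := by
  have hBr : (1 : ℝ) ≤ B := by exact_mod_cast hB1
  have hkr : (1 : ℝ) ≤ k := by exact_mod_cast hk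
  have hAB : (B : ℝ) < A := by
    have : (0 : ℝ) < k * (2 * B + κ) ^ 2 := by positivity
    linarith
  have hA'A : A ≤ A' := by
    have hA'pos : 0 < A' := by
      by_contra hcon
      have : l * A' ≤ 0 := mul_nonpos_of_nonneg_of_nonpos hl0.le (not_lt.1 hcon)
      linarith
    rw [hAA]
    nlinarith
  have hA'0 : 0 ≤ A' := by linarith
  have haB : A' * a n ≤ B := by
    have : 0 ≤ ∑ i, (w i - n i) ^ 2 := Finset.sum_nonneg fun i _ => sq_nonneg _
    unfold pow2 at hnB
    linarith
  have han : a n < 1 := by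
    by_contra hcon
    have : A' * 1 ≤ A' * a n := by gcongr; exact not_lt.1 hcon
    linarith
  by_cases han' : a n' < 1
  · obtain ⟨i0, hi0⟩ := hsep n n' han han' hne.symm
    have hid : pow2 a A n' (fun i => n i + l * (w i - n i)) -
        pow2 a A n (fun i => n i + l * (w i - n i)) =
        l * (pow2 a A' n' w - pow2 a A' n w) + (1 - l) * ∑ i, ((n' i : ℝ) - n i) ^ 2 := by
      have e : ∑ i, ((n i + l * (w i - n i)) - n' i) ^ 2 -
          ∑ i, ((n i + l * (w i - n i)) - n i) ^ 2 =
          l * (∑ i, (w i - n' i) ^ 2 - ∑ i, (w i - n i) ^ 2) +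
          (1 - l) * ∑ i, ((n' i : ℝ) - n i) ^ 2 := by
        rw [← Finset.sum_sub_distrib, ← Finset.sum_sub_distrib, Finset.mul_sum, Finset.mul_sum,
          ← Finset.sum_add_distrib]
        exact Finset.sum_congr rfl fun i _ => by ring
      unfold pow2
      rw [hAA]
      linear_combination e
    rw [hid]
    have h1 : 0 ≤ l * (pow2 a A' n' w - pow2 a A' n w) :=
      mul_nonneg hl0.le (sub_nonneg.2 (hn n'))
    -- The largest coordinate difference controls both sums.
    obtain ⟨j, _, hj⟩ := Finset.exists_max_image Finset.univ (fun i => |(n' i : ℝ) - n i|)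
      ⟨i0, Finset.mem_univ _⟩
    have h2 : ∑ i, |(n' i : ℝ) - n i| ≤ k * |(n' j : ℝ) - n j| := by
      have := Finset.sum_le_card_nsmul Finset.univ (fun i => |(n' i : ℝ) - n i|) _
        fun i hi => hj i hi
      simpa using this
    have h3 : |(n' j : ℝ) - n j| ^ 2 ≤ ∑ i, ((n' i : ℝ) - n i) ^ 2 := by
      rw [sq_abs]
      exact Finset.single_le_sum (f := fun i => ((n' i : ℝ) - n i) ^ 2)
        (fun i _ => sq_nonneg _) (Finset.mem_univ j)
    have h4 : M ≤ |(n' j : ℝ) - n j| := hi0.trans (hj i0 (Finset.mem_univ _))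
    set d := |(n' j : ℝ) - n j|
    have hd : 0 ≤ d := abs_nonneg _
    have h1l : 0 ≤ 1 - l := by linarith
    calc κ * ∑ i, |(n' i : ℝ) - n i| ≤ κ * (k * d) := by gcongr
      _ = κ * k * d := by ring
      _ ≤ (1 - l) * M * d := by gcongr
      _ ≤ (1 - l) * d * d := by gcongr
      _ = (1 - l) * d ^ 2 := by ring
      _ ≤ (1 - l) * ∑ i, ((n' i : ℝ) - n i) ^ 2 := by gcongr
      _ ≤ _ := by linarith
  · have han'1 : a n' = 1 := le_antisymm (ha1 n') (not_lt.1 han')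
    have hAan : A * a n ≤ B := by
      have : A * a n ≤ A' * a n := by gcongr; exact ha0 n
      linarith
    have hterm : ∀ i, κ * |(n' i : ℝ) - n i| - (2 * B + κ) ^ 2 ≤
        ((n i + l * (w i - n i)) - n' i) ^ 2 - ((n i + l * (w i - n i)) - n i) ^ 2 := by
      intro i
      have h1 := abs_sub_le_of_pow2_le ha0 hB1 hA'0 hnB i
      have h2 : ((n i + l * (w i - n i)) - n' i) ^ 2 - ((n i + l * (w i - n i)) - n i) ^ 2 =
          |(n' i : ℝ) - n i| ^ 2 - 2 * l * ((w i - n i) * ((n' i : ℝ) - n i)) := by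
        rw [sq_abs]; ring
      have h3 : (w i - n i) * ((n' i : ℝ) - n i) ≤ B * |(n' i : ℝ) - n i| := by
        refine (le_abs_self _).trans ?_
        rw [abs_mul]
        gcongr
      set d := |(n' i : ℝ) - n i|
      have hd : 0 ≤ d := abs_nonneg _
      have h4 : 2 * l * ((w i - n i) * ((n' i : ℝ) - n i)) ≤ 2 * (B * d) := by
        have : 2 * l * ((w i - n i) * ((n' i : ℝ) - n i)) ≤ 2 * l * (B * d) := by gcongr
        have h5 : 0 ≤ (B : ℝ) * d := by positivity
        nlinarith
      rw [h2]
      nlinarith [sq_nonneg (d - (2 * B + κ)), sq_nonneg (2 * B + κ)]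
    have hsum := Finset.sum_le_sum fun i (_ : i ∈ Finset.univ) => hterm i
    rw [Finset.sum_sub_distrib, Finset.sum_sub_distrib, ← Finset.mul_sum] at hsum
    simp only [Finset.sum_const, Finset.card_univ, Fintype.card_fin, nsmul_eq_mul] at hsum
    unfold pow2
    rw [han'1]
    linarith

/-- Volume count: the contracted cells fill most of a large cube, so few unit cubes avoid them. -/
lemma card_bad_le (ha0 : ∀ n, 0 ≤ a n) (hB1 : 1 ≤ B)
    (hR : ∀ m : Fin k → ℤ, ∃ n, (∀ i, |n i - m i| ≤ R) ∧ a n = 0)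
    (hB : B = k * (R + 1) ^ 2) {l A' : ℝ} (hl0 : 0 < l) (hl1 : l ≤ 1) (hA' : 0 ≤ A')
    (hdisj : ∀ n n' w w', IsNearest a A' n w → pow2 a A' n w ≤ B → IsNearest a A' n' w' →
      pow2 a A' n' w' ≤ B →
      (fun i => n i + l * (w i - n i)) = (fun i => n' i + l * (w' i - n' i)) → n = n')
    {L : ℕ} (hL : 2 * B ≤ L) (s : Finset (Fin k → ℤ)) (hs : s ⊆ box k L)
    (hbad : ∀ m ∈ s, ∀ n w, IsNearest a A' n w → pow2 a A' n w ≤ B →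
      ¬ ∀ i, (m i : ℝ) ≤ n i + l * (w i - n i) ∧ n i + l * (w i - n i) < m i + 1) :
    (s.card : ℝ) + l ^ k * ((L : ℝ) - 2 * B) ^ k ≤ (L : ℝ) ^ k := by
  classical
  let Q : Set (Fin k → ℝ) := Set.Icc (fun _ => (B : ℝ)) (fun _ => (L : ℝ) - B)
  let W : (Fin k → ℤ) → Set (Fin k → ℝ) := fun n => {w | IsNearest a A' n w}
  have hcont : ∀ n, Continuous fun w : Fin k → ℝ => pow2 a A' n w := by
    intro n; unfold pow2; fun_prop
  have hW : ∀ n, IsClosed (W n) := by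
    intro n
    have : W n = ⋂ n', {w | pow2 a A' n w ≤ pow2 a A' n' w} := by
      ext w; simp [W, IsNearest]
    rw [this]
    exact isClosed_iInter fun n' => isClosed_le (hcont n) (hcont n')
  let c : (Fin k → ℤ) → (Fin k → ℝ) → (Fin k → ℝ) := fun n =>
    AffineMap.homothety (fun i => (n i : ℝ)) l
  have hc : ∀ n w, c n w = fun i => n i + l * (w i - n i) := by
    intro n w
    funext i
    simp [c, AffineMap.homothety_apply]
    ring
  let C : (Fin k → ℤ) → Set (Fin k → ℝ) := fun n => c n '' (W n ∩ Q)
  have hnearB : ∀ n w, IsNearest a A' n w → pow2 a A' n w ≤ B := by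
    intro n w h
    obtain ⟨n0, hn0⟩ := exists_pow2_le hR hB A' w
    exact (h n0).trans hn0
  have hCm : ∀ n, MeasurableSet (C n) := by
    intro n
    refine IsCompact.measurableSet (IsCompact.image ?_ (AffineMap.homothety_continuous _ _))
    exact isCompact_Icc.inter_left (hW n)
  have hCd : Pairwise (Function.onFun Disjoint C) := by
    intro n n' hne
    rw [Function.onFun, Set.disjoint_left]
    rintro _ ⟨w, ⟨hw, _⟩, rfl⟩ ⟨w', ⟨hw', _⟩, h⟩
    rw [hc, hc] at h
    exact hne (hdisj n n' w w' hw (hnearB _ _ hw) hw' (hnearB _ _ hw') h.symm)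
  let D : (Fin k → ℤ) → Set (Fin k → ℝ) := fun m =>
    Set.univ.pi fun i => Set.Ico (m i : ℝ) (m i + 1)
  have hDvol : ∀ m, MeasureTheory.volume (D m) = 1 := by
    intro m
    simp [D, Real.volume_pi_Ico]
  have hDm : ∀ m, MeasurableSet (D m) := fun m =>
    MeasurableSet.univ_pi fun i => measurableSet_Ico
  have hDd : Set.PairwiseDisjoint (s : Set (Fin k → ℤ)) D := by
    intro m _ m' _ hne
    rw [Function.onFun, Set.disjoint_left]
    intro v hv hv'
    apply hne
    funext i
    have h1 := hv i (Set.mem_univ i)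
    have h2 := hv' i (Set.mem_univ i)
    have e1 : ⌊v i⌋ = m i := Int.floor_eq_iff.2 ⟨h1.1, h1.2⟩
    have e2 : ⌊v i⌋ = m' i := Int.floor_eq_iff.2 ⟨h2.1, h2.2⟩
    rw [← e1, e2]
  have hvD : MeasureTheory.volume (⋃ m ∈ s, D m) = (s.card : ℝ≥0∞) := by
    rw [MeasureTheory.measure_biUnion_finset hDd fun m _ => hDm m]
    simp [hDvol]
  have hvC : ENNReal.ofReal (l ^ k) * ENNReal.ofReal (((L : ℝ) - 2 * B) ^ k) ≤
      MeasureTheory.volume (⋃ n, C n) := by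
    rw [MeasureTheory.measure_iUnion hCd hCm]
    have e1 : ∀ n, MeasureTheory.volume (C n) =
        ENNReal.ofReal (l ^ k) * MeasureTheory.volume (W n ∩ Q) := by
      intro n
      rw [MeasureTheory.Measure.addHaar_image_homothety, Module.finrank_fintype_fun_eq_card,
        Fintype.card_fin, abs_of_nonneg (by positivity)]
    simp_rw [e1]
    rw [ENNReal.tsum_mul_left]
    gcongr
    have e2 : MeasureTheory.volume Q = ENNReal.ofReal (((L : ℝ) - 2 * B) ^ k) := by
      have hL' : (2 : ℝ) * B ≤ L := by exact_mod_cast hL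
      rw [Real.volume_Icc_pi, ENNReal.ofReal_pow (by linarith)]
      simp
      congr 2
      ring
    rw [← e2]
    refine le_trans (MeasureTheory.measure_mono ?_) (MeasureTheory.measure_iUnion_le _)
    intro w hw
    obtain ⟨n, hn, _⟩ := exists_isNearest ha0 hB1 hR hB hA' w
    exact Set.mem_iUnion.2 ⟨n, hn, hw⟩
  have hdis : Disjoint (⋃ m ∈ s, D m) (⋃ n, C n) := by
    rw [Set.disjoint_left]
    intro v hv hv'
    simp only [Set.mem_iUnion] at hv hv'
    obtain ⟨m, hm, hv⟩ := hv
    obtain ⟨n, w, ⟨hw, _⟩, rfl⟩ := hv'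
    rw [hc] at hv
    exact hbad m hm n w hw (hnearB _ _ hw) fun i => hv i (Set.mem_univ i)
  have hsub : (⋃ m ∈ s, D m) ∪ (⋃ n, C n) ⊆ Set.Icc (fun _ => (0 : ℝ)) (fun _ => (L : ℝ)) := by
    intro v hv
    rcases hv with hv | hv
    · simp only [Set.mem_iUnion] at hv
      obtain ⟨m, hm, hv⟩ := hv
      have hm' := mem_box.1 (hs hm)
      have e1 : ∀ i, (0 : ℝ) ≤ m i ∧ (m i : ℝ) + 1 ≤ L := fun i =>
        ⟨by exact_mod_cast (hm' i).1, by exact_mod_cast (hm' i).2⟩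
      have e2 := fun i => hv i (Set.mem_univ i)
      exact ⟨fun i => (e1 i).1.trans (e2 i).1, fun i => (e2 i).2.le.trans (e1 i).2⟩
    · simp only [Set.mem_iUnion] at hv
      obtain ⟨n, w, ⟨hw, hwQ⟩, rfl⟩ := hv
      rw [hc]
      have e1 := fun i => abs_le.1 (abs_sub_le_of_pow2_le ha0 hB1 hA' (hnearB _ _ hw) i)
      have h1l : 0 ≤ 1 - l := by linarith
      have e2 : ∀ i, (n i : ℝ) + l * (w i - n i) = w i - (1 - l) * (w i - n i) := by
        intro i; ring
      have hB0 : (0 : ℝ) ≤ B := by positivity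
      constructor
      · intro i
        have := hwQ.1 i
        simp only at this ⊢
        rw [e2]
        nlinarith [(e1 i).2]
      · intro i
        have := hwQ.2 i
        simp only at this ⊢
        rw [e2]
        nlinarith [(e1 i).1]
  have htot := MeasureTheory.measure_mono (μ := MeasureTheory.volume) hsub
  rw [MeasureTheory.measure_union hdis (MeasurableSet.iUnion hCm), hvD, Real.volume_Icc_pi] at htot
  have hfin := (add_le_add_right hvC (s.card : ℝ≥0∞)).trans htot
  have hL' : (2 : ℝ) * B ≤ L := by exact_mod_cast hL
  have hp : (0 : ℝ) ≤ ((L : ℝ) - 2 * B) ^ k := pow_nonneg (by linarith) _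
  simp only [sub_zero, Finset.prod_const, Finset.card_univ, Fintype.card_fin] at hfin
  rw [← ENNReal.ofReal_mul (by positivity), ← ENNReal.ofReal_natCast s.card,
    ← ENNReal.ofReal_add (by positivity) (by positivity),
    ← ENNReal.ofReal_pow (by positivity), ENNReal.ofReal_le_ofReal_iff (by positivity)] at hfin
  exact hfin

end Geometry

/-! ### Almost-towers from markers -/

section Towers

variable {k : ℕ} {X : Type*} [MetricSpace X] [CompactSpace X] {T : (Fin k → ℤ) → X → X}

/-- A marker set, shrunk to a continuous function `ω` with `ω < 1` only on the marker set and
`ω = 0` syndetically along every orbit. -/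
lemma exists_marker_function (hT : IsZkAction T) (hmarker : MarkerProperty T) (M : ℕ) :
    ∃ ω : X → ℝ, Continuous ω ∧ (∀ x, 0 ≤ ω x) ∧ (∀ x, ω x ≤ 1) ∧
      (∀ x (n : Fin k → ℤ), ω x < 1 → ω (T n x) < 1 → (∀ i, |n i| ≤ (M : ℤ)) → n = 0) ∧
      ∃ R : ℕ, ∀ x, ∃ n : Fin k → ℤ, (∀ i, |n i| ≤ (R : ℤ)) ∧ ω (T n x) = 0 := by
  classical
  obtain ⟨U, hU, hcov, hsep⟩ :=
    hmarker (Fintype.piFinset fun _ => Finset.Icc (-(M : ℤ)) M)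
  have hret : ∀ x, ∃ n, T n x ∈ U := by
    intro x
    have hx : x ∈ ⋃ n, T n '' U := hcov ▸ Set.mem_univ x
    obtain ⟨n, y, hy, rfl⟩ := Set.mem_iUnion.1 hx
    exact ⟨-n, by rw [← hT.map_add, neg_add_cancel, hT.map_zero]; exact hy⟩
  choose r hr using hret
  have hW : ∀ x, ∃ W : Set X, IsOpen W ∧ T (r x) x ∈ W ∧ closure W ⊆ U := fun x => by
    obtain ⟨C, hC, hCc, hCU⟩ := exists_mem_nhds_isClosed_subset (hU.mem_nhds (hr x))
    exact ⟨interior C, isOpen_interior, mem_interior_iff_mem_nhds.2 hC,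
      (closure_minimal interior_subset hCc).trans hCU⟩
  choose W hWo hWm hWU using hW
  obtain ⟨t, ht⟩ := isCompact_univ.elim_finite_subcover (fun x => T (r x) ⁻¹' W x)
    (fun x => (hWo x).preimage (hT.cont _)) (fun x _ => Set.mem_iUnion.2 ⟨x, hWm x⟩)
  have hK0 : IsClosed (⋃ x ∈ t, closure (W x)) :=
    t.finite_toSet.isClosed_biUnion fun x _ => isClosed_closure
  obtain ⟨ω, hω0, hω1, hω⟩ := exists_continuous_zero_one_of_isClosed hK0 hU.isClosed_compl (by
    rw [Set.disjoint_compl_right_iff_subset]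
    exact Set.iUnion₂_subset fun x _ => hWU x)
  have hωU : ∀ x, ω x < 1 → x ∈ U := by
    intro x hx
    by_contra hcon
    exact absurd (hω1 hcon) hx.ne
  refine ⟨ω, ω.continuous, fun x => (hω x).1, fun x => (hω x).2, ?_, ?_⟩
  · intro x n hx hnx hn
    by_contra hne
    have := hsep n (by
      rw [Fintype.mem_piFinset]
      intro i
      rw [Finset.mem_Icc]
      exact abs_le.1 (hn i)) hne
    have hmem : T n x ∈ U ∩ T n '' U := ⟨hωU _ hnx, x, hωU _ hx, rfl⟩
    rw [this] at hmem
    exact hmem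
  · refine ⟨∑ x ∈ t, ∑ i, (r x i).natAbs, fun x => ?_⟩
    have := ht (Set.mem_univ x)
    simp only [Set.mem_iUnion] at this
    obtain ⟨p, hp, hx⟩ := this
    refine ⟨r p, fun i => ?_, ?_⟩
    · have h1 : (r p i).natAbs ≤ ∑ i, (r p i).natAbs :=
        Finset.single_le_sum (f := fun i => (r p i).natAbs) (fun _ _ => Nat.zero_le _)
          (Finset.mem_univ i)
      have h2 : ∑ i, (r p i).natAbs ≤ ∑ x ∈ t, ∑ i, (r x i).natAbs :=
        Finset.single_le_sum (f := fun x => ∑ i, (r x i).natAbs) (fun _ _ => Nat.zero_le _) hp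
      rw [Int.abs_eq_natAbs]
      exact_mod_cast h1.trans h2
    · exact hω0 (Set.mem_iUnion₂.2 ⟨p, hp, subset_closure hx⟩)

/-- A continuous Rokhlin-type lemma: the translates by `{0,…,N-1}^k` of an open set `V` are
pairwise disjoint, while those of a closed subset `K` already cover every long orbit segment up to
a proportion `δ`. Points of `V` are those `y` for which the power diagram of the markers, seen from
`y`, has a site in `N ℤ^k` winning near the origin with a gap. -/
lemma exists_towers (hk : 1 ≤ k) (hT : IsZkAction T) (hmarker : MarkerProperty T) {N : ℕ}
    (hN : 1 ≤ N) {δ : ℝ} (hδ : 0 < δ) (hδ1 : δ ≤ 1) :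
    ∃ K V : Set X, IsClosed K ∧ IsOpen V ∧ K ⊆ V ∧
      (∀ y b, (∀ i, |b i| < (N : ℤ)) → y ∈ V → T b y ∈ V → b = 0) ∧
      ∃ L0 : ℕ, ∀ L, L0 ≤ L → ∀ x, ∀ s : Finset (Fin k → ℤ), s ⊆ box k L →
        (∀ m ∈ s, ¬ ∃ u, (∀ i, u i ≤ m i ∧ m i < u i + N) ∧ T u x ∈ K) →
        (s.card : ℝ) ≤ δ * (L : ℝ) ^ k := by
  classical
  have hkr : (1 : ℝ) ≤ k := by exact_mod_cast hk
  have hNr : (1 : ℝ) ≤ N := by exact_mod_cast hN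
  obtain ⟨l, hl⟩ : ∃ l : ℝ, l = 1 - δ / (2 * k) := ⟨_, rfl⟩
  have hq0 : 0 < δ / (2 * k) := by positivity
  have hq1 : δ / (2 * k) ≤ 1 / 2 := by
    rw [div_le_div_iff₀ (by positivity) (by norm_num)]
    nlinarith
  have hl0 : 0 < l := by linarith
  have hl1 : l ≤ 1 := by linarith
  obtain ⟨κ, hκ⟩ : ∃ κ : ℝ, κ = 4 * N + 1 := ⟨_, rfl⟩
  have hκ0 : 0 ≤ κ := by rw [hκ]; positivity
  obtain ⟨M, hM⟩ := exists_nat_ge (κ * k / (δ / (2 * k)))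
  have hMκ : κ * k ≤ (1 - l) * M := by
    rw [div_le_iff₀ hq0] at hM
    have : 1 - l = δ / (2 * k) := by rw [hl]; ring
    rw [this]
    linarith [mul_comm (M : ℝ) (δ / (2 * k))]
  obtain ⟨ω, hωc, hω0, hω1, hωsep, R, hR⟩ := exists_marker_function hT hmarker M
  obtain ⟨B, hB⟩ : ∃ B : ℕ, B = k * (R + 1) ^ 2 := ⟨_, rfl⟩
  have hB1 : 1 ≤ B := by
    rw [hB]
    exact Nat.mul_pos hk (by positivity)
  obtain ⟨A, hA⟩ : ∃ A : ℝ, A = B + k * (2 * B + κ) ^ 2 := ⟨_, rfl⟩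
  have hA0 : 0 ≤ A := by rw [hA]; positivity
  have hA'0 : 0 ≤ A / l := by positivity
  have hAA : A = l * (A / l) := by field_simp
  -- The weights along the orbit of `x`.
  let a : X → (Fin k → ℤ) → ℝ := fun x n => ω (T n x)
  have ha0 : ∀ x n, 0 ≤ a x n := fun x n => hω0 _
  have ha1 : ∀ x n, a x n ≤ 1 := fun x n => hω1 _
  have haR : ∀ x (m : Fin k → ℤ), ∃ n, (∀ i, |n i - m i| ≤ R) ∧ a x n = 0 := by
    intro x m
    obtain ⟨n, hn, hn0⟩ := hR (T m x)
    refine ⟨n + m, fun i => by simpa using hn i, ?_⟩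
    simp only [a]
    rw [hT.map_add]
    exact hn0
  have hasep : ∀ x n n', a x n < 1 → a x n' < 1 → n ≠ n' → ∃ i, (M : ℝ) ≤ |(n' i : ℝ) - n i| := by
    intro x n n' h1 h2 hne
    by_contra hcon
    push Not at hcon
    have := hωsep (T n x) (n' - n) h1 (by rw [← hT.map_add, sub_add_cancel]; exact h2) (by
      intro i
      have := (hcon i).le
      exact_mod_cast this)
    exact hne (sub_eq_zero.1 this).symm
  have hgap : ∀ x n w, IsNearest (a x) (A / l) n w → pow2 (a x) (A / l) n w ≤ B →
      ∀ n', n' ≠ n → κ * ∑ i, |(n' i : ℝ) - n i| ≤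
        pow2 (a x) A n' (fun i => n i + l * (w i - n i)) -
        pow2 (a x) A n (fun i => n i + l * (w i - n i)) := fun x n w h1 h2 n' hne =>
    gap_of_isNearest hk (ha0 x) (ha1 x) hB1 hκ0 hl0 hl1 hMκ hAA hA.ge (hasep x) h1 h2 n' hne
  have hl1pos : ∀ n n' : Fin k → ℤ, n' ≠ n → 0 < ∑ i, |(n' i : ℝ) - n i| := by
    intro n n' hne
    obtain ⟨i, hi⟩ := Function.ne_iff.1 hne
    refine Finset.sum_pos' (fun i _ => abs_nonneg _) ⟨i, Finset.mem_univ _, abs_pos.2 ?_⟩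
    rw [sub_ne_zero]
    exact_mod_cast hi
  let gap : (Fin k → ℤ) → (Fin k → ℤ) → X → ℝ := fun n n' y =>
    ∑ i, ((n' i : ℝ) ^ 2 - (n i : ℝ) ^ 2) + A * (ω (T n' y) - ω (T n y))
  have hgapc : ∀ n n', Continuous (gap n n') := fun n n' =>
    continuous_const.add (continuous_const.mul ((hωc.comp (hT.cont _)).sub (hωc.comp (hT.cont _))))
  let R1 : ℤ := B + 1 + N
  let R2 : ℤ := R1 + N
  let I1 : Finset (Fin k → ℤ) := (Fintype.piFinset fun _ => Finset.Icc (-R1) R1).filter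
    fun n => ∀ i, (N : ℤ) ∣ n i
  let I2 : Finset (Fin k → ℤ) := Fintype.piFinset fun _ => Finset.Icc (-R2) R2
  have hI1 : ∀ n, n ∈ I1 ↔ (∀ i, |n i| ≤ R1) ∧ ∀ i, (N : ℤ) ∣ n i := by
    intro n; simp [I1, abs_le]
  have hI2 : ∀ n, n ∈ I2 ↔ ∀ i, |n i| ≤ R2 := by
    intro n; simp [I2, abs_le]
  let V : Set X := ⋃ n ∈ I1, ⋂ n' ∈ I2.erase n, {y | 2 * N * ∑ i, |(n' i : ℝ) - n i| < gap n n' y}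
  let K : Set X := ⋃ n ∈ I1, ⋂ n' ∈ I2.erase n,
    {y | (2 * N + 1) * ∑ i, |(n' i : ℝ) - n i| ≤ gap n n' y}
  refine ⟨K, V, ?_, ?_, ?_, ?_, ?_⟩
  · refine I1.finite_toSet.isClosed_biUnion fun n _ => isClosed_biInter fun n' _ => ?_
    exact isClosed_le continuous_const (hgapc n n')
  · refine isOpen_biUnion fun n _ => (I2.erase n).finite_toSet.isOpen_biInter fun n' _ => ?_
    exact isOpen_lt continuous_const (hgapc n n')
  · refine Set.iUnion₂_mono fun n _ => Set.iInter₂_mono fun n' hn' y hy => ?_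
    have := hl1pos n n' (Finset.ne_of_mem_erase hn')
    rw [Set.mem_ofPred_eq] at hy ⊢
    refine lt_of_lt_of_le ?_ hy
    nlinarith
  · intro y b hb hy hby
    by_contra hb0
    simp only [V, Set.mem_iUnion, Set.mem_iInter] at hy hby
    obtain ⟨n1, hn1, h1⟩ := hy
    obtain ⟨n2, hn2, h2⟩ := hby
    rw [hI1] at hn1 hn2
    have hne : n2 + b ≠ n1 := by
      intro he
      apply hb0
      funext i
      have hd : (N : ℤ) ∣ b i := by
        have : b i = n1 i - n2 i := by rw [← he]; simp
        rw [this]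
        exact dvd_sub (hn1.2 i) (hn2.2 i)
      exact Int.eq_zero_of_abs_lt_dvd hd (hb i)
    have g1 := h1 (n2 + b) (Finset.mem_erase.2 ⟨hne, (hI2 _).2 fun i =>
      (abs_add_le _ _).trans (add_le_add (hn2.1 i) (hb i).le)⟩)
    have g2 := h2 (n1 - b) (Finset.mem_erase.2 ⟨fun h => hne (by rw [← h]; simp), (hI2 _).2 fun i =>
      (abs_sub _ _).trans (add_le_add (hn1.1 i) (hb i).le)⟩)
    simp only [gap, Set.mem_ofPred_eq] at g1 g2
    rw [← hT.map_add, ← hT.map_add, sub_add_cancel] at g2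
    have e1 : ∑ i, |((n1 - b) i : ℝ) - n2 i| = ∑ i, |((n2 + b) i : ℝ) - n1 i| := by
      refine Finset.sum_congr rfl fun i _ => ?_
      rw [abs_sub_comm]
      simp only [Pi.add_apply, Pi.sub_apply]
      push_cast
      congr 1
      ring
    rw [e1] at g2
    have e2 : ∑ i, (((n2 + b) i : ℝ) ^ 2 - (n1 i : ℝ) ^ 2) +
        ∑ i, (((n1 - b) i : ℝ) ^ 2 - (n2 i : ℝ) ^ 2) ≤
        2 * N * ∑ i, |((n2 + b) i : ℝ) - n1 i| := by
      rw [← Finset.sum_add_distrib, Finset.mul_sum]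
      refine Finset.sum_le_sum fun i _ => ?_
      have e3 : ((n2 + b) i : ℝ) ^ 2 - (n1 i : ℝ) ^ 2 + (((n1 - b) i : ℝ) ^ 2 - (n2 i : ℝ) ^ 2) =
          2 * ((b i : ℝ) * (((n2 + b) i : ℝ) - n1 i)) := by
        simp only [Pi.add_apply, Pi.sub_apply]
        push_cast
        ring
      rw [e3, mul_assoc]
      have e4 : |(b i : ℝ)| ≤ N := by exact_mod_cast (hb i).le
      have e5 := le_abs_self ((b i : ℝ) * (((n2 + b) i : ℝ) - n1 i))
      rw [abs_mul] at e5
      have e6 : |(b i : ℝ)| * |((n2 + b) i : ℝ) - n1 i| ≤ N * |((n2 + b) i : ℝ) - n1 i| := by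
        gcongr
      linarith
    have e7 := hl1pos n1 (n2 + b) hne
    have e8 : (0 : ℝ) < 2 * N * ∑ i, |((n2 + b) i : ℝ) - n1 i| := by positivity
    linarith
  · obtain ⟨L0, hL0⟩ := exists_nat_ge (2 * B / (δ / (2 * k)))
    refine ⟨max L0 (2 * B), fun L hL x s hs hbad => ?_⟩
    have hLB : 2 * B ≤ L := (le_max_right _ _).trans hL
    have hLL0 : L0 ≤ L := (le_max_left _ _).trans hL
    have key := card_bad_le (ha0 x) hB1 (haR x) hB hl0 hl1 hA'0 (by
      intro n n' w w' h1 h2 h3 h4 he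
      by_contra hne
      have g1 := hgap x n w h1 h2 n' (Ne.symm hne)
      have g2 := hgap x n' w' h3 h4 n hne
      rw [← he] at g2
      have p1 := hl1pos n n' (Ne.symm hne)
      have p2 := hl1pos n' n hne
      have hκ1 : 0 < κ := by rw [hκ]; positivity
      have q1 := mul_pos hκ1 p1
      have q2 := mul_pos hκ1 p2
      linarith) hLB s hs (by
      intro m hm n w h1 h2 hv
      apply hbad m hm
      have hN0 : (0 : ℤ) < N := by exact_mod_cast hN
      let u : Fin k → ℤ := fun i => n i + N * ((m i - n i) / N)
      have hu : ∀ i, u i ≤ m i ∧ m i < u i + N := by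
        intro i
        have e1 := Int.emod_nonneg (m i - n i) hN0.ne'
        have e2 := Int.emod_lt_of_pos (m i - n i) hN0
        have e3 := Int.emod_add_mul_ediv (m i - n i) N
        simp only [u]
        constructor <;> linarith
      have hdv : ∀ i, |(w i - n i : ℝ)| ≤ B :=
        fun i => abs_sub_le_of_pow2_le (ha0 x) hB1 hA'0 h2 i
      refine ⟨u, hu, ?_⟩
      simp only [K, Set.mem_iUnion, Set.mem_iInter]
      refine ⟨n - u, (hI1 _).2 ⟨fun i => ?_, fun i => ?_⟩, fun n' hn' => ?_⟩
      · have e1 : |l * (w i - n i)| ≤ B := by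
          rw [abs_mul, abs_of_pos hl0]
          nlinarith [hdv i, abs_nonneg (w i - n i)]
        have e2 := abs_le.1 e1
        have e3 := hv i
        have e4 : (m i : ℝ) - n i ≤ (B : ℝ) := by linarith
        have e5 : -((B : ℝ) + 1) ≤ (m i : ℝ) - n i := by linarith
        have e6 : m i - n i ≤ B := by exact_mod_cast e4
        have e7 : -((B : ℤ) + 1) ≤ m i - n i := by exact_mod_cast e5
        have e8 := hu i
        rw [abs_le]
        simp only [Pi.sub_apply, R1]
        constructor <;> linarith
      · simp only [Pi.sub_apply, u]
        exact ⟨-((m i - n i) / N), by ring⟩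
      · have hne : n' + u ≠ n := by
          intro h
          exact Finset.ne_of_mem_erase hn' (by rw [← h]; simp)
        have g := hgap x n w h1 h2 (n' + u) hne
        simp only [gap, Set.mem_ofPred_eq]
        rw [← hT.map_add, ← hT.map_add, sub_add_cancel]
        have e0 : ∑ i, |(n' i : ℝ) - ((n - u) i : ℤ)| = ∑ i, |((n' + u) i : ℝ) - n i| := by
          refine Finset.sum_congr rfl fun i _ => ?_
          simp only [Pi.add_apply, Pi.sub_apply]
          push_cast
          congr 1
          ring
        rw [e0]
        have e1 : ∑ i, ((n i + l * (w i - n i)) - ((n' + u) i : ℝ)) ^ 2 -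
            ∑ i, ((n i + l * (w i - n i)) - (n i : ℝ)) ^ 2 ≤
            ∑ i, ((n' i : ℝ) ^ 2 - (((n - u) i : ℤ) : ℝ) ^ 2) +
            2 * N * ∑ i, |((n' + u) i : ℝ) - n i| := by
          rw [← Finset.sum_sub_distrib, Finset.mul_sum, ← Finset.sum_add_distrib]
          refine Finset.sum_le_sum fun i _ => ?_
          have hui := hu i
          have f1 : (u i : ℝ) ≤ m i := by exact_mod_cast hui.1
          have f2 : (m i : ℝ) + 1 ≤ u i + N := by exact_mod_cast hui.2
          have f3 := hv i
          set v : ℝ := n i + l * (w i - n i)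
          have f4 : |v - u i| ≤ N := by rw [abs_le]; constructor <;> linarith
          have f5 : -((v - u i) * (((n' + u) i : ℝ) - n i)) ≤ N * |((n' + u) i : ℝ) - n i| := by
            refine (neg_le_abs _).trans ?_
            rw [abs_mul]
            gcongr
          have f6 : (v - ((n' + u) i : ℝ)) ^ 2 - (v - (n i : ℝ)) ^ 2 =
              ((n' i : ℝ) ^ 2 - (((n - u) i : ℤ) : ℝ) ^ 2) +
              2 * (-((v - u i) * (((n' + u) i : ℝ) - n i))) := by
            simp only [Pi.add_apply, Pi.sub_apply]
            push_cast
            ring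
          rw [f6, mul_assoc]
          linarith
        unfold pow2 at g
        have e2 : (2 * N + 1) * ∑ i, |((n' + u) i : ℝ) - n i| =
            κ * ∑ i, |((n' + u) i : ℝ) - n i| - 2 * N * ∑ i, |((n' + u) i : ℝ) - n i| := by
          rw [hκ]; ring
        rw [e2]
        simp only [a] at g
        linarith)
    have hLpos : (0 : ℝ) < L := by
      have : 1 ≤ L := by omega
      exact_mod_cast this
    have hL0r : 2 * (B : ℝ) ≤ δ / (2 * k) * L := by
      rw [div_le_iff₀ hq0] at hL0
      have : (L0 : ℝ) ≤ L := by exact_mod_cast hLL0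
      nlinarith
    have hlow : (1 - δ / k) * L ≤ l * (L - 2 * B) := by
      have e1 : δ / k = δ / (2 * k) + δ / (2 * k) := by field_simp; norm_num
      rw [e1, hl]
      have hB0 : (0 : ℝ) ≤ B := by positivity
      nlinarith
    have hdk : δ / k ≤ 1 := by
      rw [div_le_one (by positivity)]
      linarith
    have hpow : (1 - δ) * (L : ℝ) ^ k ≤ l ^ k * ((L : ℝ) - 2 * B) ^ k := by
      have b1 : 1 - δ ≤ (1 - δ / k) ^ k := by
        have := one_add_mul_le_pow (a := -(δ / k)) (by linarith) k
        have e : (k : ℝ) * -(δ / k) = -δ := by field_simp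
        rw [e, ← sub_eq_add_neg, ← sub_eq_add_neg] at this
        exact this
      rw [← mul_pow]
      calc (1 - δ) * (L : ℝ) ^ k ≤ (1 - δ / k) ^ k * (L : ℝ) ^ k := by gcongr
        _ = ((1 - δ / k) * L) ^ k := by rw [mul_pow]
        _ ≤ _ := by
          refine pow_le_pow_left₀ (mul_nonneg (by linarith) hLpos.le) hlow k
    linarith

end Towers

/-! ### Generic level sets have zero capacity -/

section Density

variable {k : ℕ} {X : Type*} [MetricSpace X] [CompactSpace X] {T : (Fin k → ℤ) → X → X}

/-- When the mean dimension vanishes, any function can be perturbed so that a prescribed level set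
is visited rarely: on each tower the values of `f` along the block are replaced by a generic map
factoring through a complex of dimension `D` much smaller than the size `N ^ k` of the block. -/
lemma exists_perturb (hk : 1 ≤ k) (hT : IsZkAction T) (hmarker : MarkerProperty T)
    (hmd : mdim X T = 0) {f : X → ℝ} (hf : Continuous f) (t : ℝ) {δ η : ℝ} (hδ : 0 < δ)
    (hη : 0 < η) :
    ∃ g : X → ℝ, Continuous g ∧ (∀ x, |g x - f x| ≤ 2 * η) ∧
      ∃ L : ℕ, 1 ≤ L ∧ CapLe T {x | g x = t} δ L := by
  classical
  wlog hδ1 : δ ≤ 1 generalizing δ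
  · obtain ⟨g, h1, h2, L, h3, h4⟩ := this one_pos le_rfl
    exact ⟨g, h1, h2, L, h3, h4.mono_const (not_le.1 hδ1).le⟩
  obtain ⟨ε, hε, hfε⟩ := Metric.uniformContinuous_iff.1
    (CompactSpace.uniformContinuous_of_continuous hf) η hη
  have hc0 : 0 < δ / 2 ^ (k + 1) := by positivity
  obtain ⟨N, hN, hD⟩ : ∃ N : ℕ, 1 ≤ N ∧
      ((widim X (blockRho T dist N) ε : ℕ) : ℝ) ≤ δ / 2 ^ (k + 1) * (N : ℝ) ^ k := by
    have h0 : (⨅ (N : ℕ) (_ : 1 ≤ N),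
        (widim X (blockRho T dist N) ε : ℝ≥0∞) / (N : ℝ≥0∞) ^ k) <
        ENNReal.ofReal (δ / 2 ^ (k + 1)) := by
      refine lt_of_le_of_lt ?_ (ENNReal.ofReal_pos.2 hc0)
      rw [← hmd]
      exact le_iSup₂_of_le (f := fun (ε : ℝ) (_ : 0 < ε) => ⨅ (N : ℕ) (_ : 1 ≤ N),
        (widim X (blockRho T dist N) ε : ℝ≥0∞) / (N : ℝ≥0∞) ^ k) ε hε le_rfl
    obtain ⟨N, h1⟩ := iInf_lt_iff.1 h0
    obtain ⟨hN, h2⟩ := iInf_lt_iff.1 h1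
    refine ⟨N, hN, ?_⟩
    have hN0 : (N : ℝ≥0∞) ^ k ≠ 0 := by
      have : N ≠ 0 := by omega
      simp [this]
    have h3 := (ENNReal.div_le_iff hN0 (by finiteness)).1 h2.le
    have h4 : (N : ℝ≥0∞) ^ k = ENNReal.ofReal ((N : ℝ) ^ k) := by
      rw [ENNReal.ofReal_pow (by positivity), ENNReal.ofReal_natCast]
    rw [h4, ← ENNReal.ofReal_mul hc0.le, ← ENNReal.ofReal_natCast] at h3
    exact (ENNReal.ofReal_le_ofReal_iff (by positivity)).1 h3
  obtain ⟨m, P, hPfin, hPcard, F, hFc, hF⟩ := widimLe_widim (X := X) hT hN hε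
  set D := widim X (blockRho T dist N) ε
  let c : (Fin k → Fin N) → (Fin k → ℤ) := fun a i => (a i : ℤ)
  have hcN : ∀ a a' i, |c a i - c a' i| < (N : ℤ) := by
    intro a a' i
    have h1 := (a i).2
    have h2 := (a' i).2
    simp only [c]
    rw [abs_lt]
    constructor <;> omega
  have hcinj : ∀ a a', c a - c a' = 0 → a = a' := by
    intro a a' h
    funext i
    have := congrFun h i
    simp only [c, Pi.sub_apply, Pi.zero_apply] at this
    exact Fin.ext (by omega)
  obtain ⟨G, hGc, hGf, hGcard⟩ := exists_generic P hPfin hPcard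
    (fun x => (F x : EuclideanSpace ℝ (Fin m)))
    (continuous_subtype_val.comp hFc) (fun x => (F x).2) (fun a x => f (T (c a) x))
    (fun a => hf.comp (hT.cont _)) hη (by
      intro x y hxy a
      have := (blockRho_lt_iff T dist hN x y ε).1 (hF x y (Subtype.ext hxy)) a
      exact hfε this) t
  obtain ⟨K, V, hK, hV, hKV, hVsep, L0, hL0⟩ :=
    exists_towers hk hT hmarker hN (half_pos hδ) (by linarith)
  obtain ⟨ψ, hψ0, hψ1, hψ⟩ := exists_continuous_zero_one_of_isClosed hV.isClosed_compl hK
    (Set.disjoint_compl_left_iff_subset.2 hKV)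
  have hone : ∀ y a a', T (-c a) y ∈ V → T (-c a') y ∈ V → a = a' := by
    intro y a a' h1 h2
    refine hcinj a a' (hVsep (T (-c a) y) _ (fun i => hcN a a' i) h1 ?_)
    rw [← hT.map_add]
    convert h2 using 2
    abel
  let g : X → ℝ := fun y => f y + ∑ a, ψ (T (-c a) y) * (G (T (-c a) y) a - f y)
  have hg1 : ∀ y a, T (-c a) y ∈ V →
      g y = f y + ψ (T (-c a) y) * (G (T (-c a) y) a - f y) := by
    intro y a ha
    simp only [g]
    congr 1
    refine Finset.sum_eq_single a (fun b _ hb => ?_) (fun h => absurd (Finset.mem_univ _) h)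
    have : T (-c b) y ∈ Vᶜ := fun h => hb (hone y b a h ha)
    rw [hψ0 this]
    simp
  refine ⟨g, ?_, ?_, max (max L0 (2 * N)) 1, le_max_right _ _, ?_⟩
  · refine hf.add (continuous_finsetSum _ fun a _ => ?_)
    refine (ψ.continuous.comp (hT.cont _)).mul (Continuous.sub ?_ hf)
    exact (continuous_apply a).comp (hGc.comp (hT.cont _))
  · intro y
    by_cases h : ∃ a, T (-c a) y ∈ V
    · obtain ⟨a, ha⟩ := h
      rw [hg1 y a ha, add_sub_cancel_left, abs_mul]
      have h1 := hGf (T (-c a) y) a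
      have h2 : T (c a) (T (-c a) y) = y := by
        rw [← hT.map_add, add_neg_cancel, hT.map_zero]
      simp only [h2] at h1
      have h3 := hψ (T (-c a) y)
      rw [abs_of_nonneg h3.1]
      calc _ ≤ 1 * |G (T (-c a) y) a - f y| := by gcongr; exact h3.2
        _ ≤ _ := by rw [one_mul]; exact h1
    · push Not at h
      have : g y = f y := by
        simp only [g]
        rw [Finset.sum_eq_zero, add_zero]
        intro a _
        have h1 : T (-c a) y ∈ Vᶜ := h a
        rw [hψ0 h1]
        simp
      rw [this, sub_self, abs_zero]
      positivity
  · intro x s hs hm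
    set L := max (max L0 (2 * N)) 1
    have hLL0 : L0 ≤ L := (le_max_left _ _).trans (le_max_left _ _)
    have hLN : 2 * N ≤ L := (le_max_right L0 _).trans (le_max_left _ _)
    let good : (Fin k → ℤ) → Prop := fun m => ∃ u : Fin k → ℤ,
      (∀ i, u i ≤ m i ∧ m i < u i + N) ∧ T u x ∈ K
    have hbad := hL0 L hLL0 x (s.filter fun m => ¬ good m) ((Finset.filter_subset _ _).trans hs)
      (fun m hm => (Finset.mem_filter.1 hm).2)
    let u : (Fin k → ℤ) → (Fin k → ℤ) := fun m => if h : good m then h.choose else 0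
    have hu : ∀ m, good m → (∀ i, u m i ≤ m i ∧ m i < u m i + N) ∧ T (u m) x ∈ K := by
      intro m h
      simp only [u, dif_pos h]
      exact h.choose_spec
    let sg := s.filter good
    have hcard1 : sg.card ≤ D * (sg.image u).card := by
      refine Finset.card_le_mul_card_image sg D fun v hv => ?_
      obtain ⟨m0, hm0, rfl⟩ := Finset.mem_image.1 hv
      have hK0 := (hu m0 (Finset.mem_filter.1 hm0).2).2
      refine le_trans ?_ (hGcard (T (u m0) x) (Finset.univ.filter fun a => G (T (u m0) x) a = t)
        (fun a ha => (Finset.mem_filter.1 ha).2))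
      have hex : ∀ m ∈ sg.filter (fun m => u m = u m0), ∃ a, m = c a + u m0 := by
        intro m hmm
        obtain ⟨h1, h2⟩ := Finset.mem_filter.1 hmm
        have h3 := (hu m (Finset.mem_filter.1 h1).2).1
        rw [h2] at h3
        refine ⟨fun i => ⟨(m i - u m0 i).toNat, ?_⟩, ?_⟩
        · have := h3 i
          omega
        · funext i
          have := h3 i
          simp only [c, Pi.add_apply]
          omega
      refine Finset.card_le_card_of_forall_subsingleton (fun m a => m = c a + u m0) ?_ ?_
      · intro m hmm
        obtain ⟨a, ha⟩ := hex m hmm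
        refine ⟨a, Finset.mem_filter.2 ⟨Finset.mem_univ _, ?_⟩, ha⟩
        have h4 : g (T m x) = t := hm m (Finset.mem_filter.1 (Finset.mem_filter.1 hmm).1).1
        have h5 : T (-c a) (T m x) = T (u m0) x := by
          rw [← hT.map_add, ha, neg_add_cancel_left]
        rw [hg1 (T m x) a (by rw [h5]; exact hKV hK0), h5, hψ1 hK0] at h4
        simpa using h4
      · intro a ha m hm1 m' hm2
        exact hm1.2.trans hm2.2.symm
    have hcard2 : (sg.image u).card * N ^ k ≤ (L + 2 * N) ^ k := by
      have h1 : ((sg.image u) ×ˢ (Finset.univ : Finset (Fin k → Fin N))).card =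
          (sg.image u).card * N ^ k := by
        rw [Finset.card_product]
        simp
      have h2 : (Fintype.piFinset fun _ : Fin k =>
          Finset.Ico (-(N : ℤ)) (L + N)).card = (L + 2 * N) ^ k := by
        rw [Fintype.card_piFinset]
        simp only [Int.card_Ico, Finset.prod_const, Finset.card_univ, Fintype.card_fin]
        congr 1
        omega
      rw [← h1, ← h2]
      refine Finset.card_le_card_of_injOn (fun p => p.1 + c p.2) ?_ ?_
      · intro p hp
        obtain ⟨hp1, -⟩ := Finset.mem_product.1 (Finset.mem_coe.1 hp)
        obtain ⟨m0, hm0, h3⟩ := Finset.mem_image.1 hp1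
        obtain ⟨hs0, hg0⟩ := Finset.mem_filter.1 hm0
        have h4 := mem_box.1 (hs hs0)
        have h5 := (hu m0 hg0).1
        rw [Finset.mem_coe, Fintype.mem_piFinset]
        intro i
        have h6 := h4 i
        have h7 := h5 i
        have h8 := (p.2 i).2
        rw [h3] at h7
        simp only [Finset.mem_Ico, Pi.add_apply, c]
        constructor <;> omega
      · intro p hp p' hp' heq
        obtain ⟨hp1, -⟩ := Finset.mem_product.1 (Finset.mem_coe.1 hp)
        obtain ⟨hp1', -⟩ := Finset.mem_product.1 (Finset.mem_coe.1 hp')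
        obtain ⟨m0, hm0, h3⟩ := Finset.mem_image.1 hp1
        obtain ⟨m1, hm1, h3'⟩ := Finset.mem_image.1 hp1'
        have hk0 := (hu m0 (Finset.mem_filter.1 hm0).2).2
        have hk1 := (hu m1 (Finset.mem_filter.1 hm1).2).2
        rw [h3] at hk0
        rw [h3'] at hk1
        simp only at heq
        have h4 : c p.2 - c p'.2 = p'.1 - p.1 := by
          rw [sub_eq_sub_iff_add_eq_add, add_comm, heq]
        have h5 : c p.2 - c p'.2 = 0 := by
          refine hVsep (T p.1 x) _ (fun i => hcN _ _ i) (hKV hk0) ?_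
          rw [h4, ← hT.map_add, sub_add_cancel]
          exact hKV hk1
        refine Prod.ext ?_ (hcinj _ _ h5)
        rw [h5] at h4
        exact (sub_eq_zero.1 h4.symm).symm
    have hsplit : (s.card : ℝ) = sg.card + (s.filter fun m => ¬ good m).card := by
      rw [← Finset.card_filter_add_card_filter_not (s := s) good]
      push_cast
      rfl
    have hfin : (sg.card : ℝ) ≤ δ / 2 * (L : ℝ) ^ k := by
      have h1 : (sg.card : ℝ) ≤ D * (sg.image u).card := by exact_mod_cast hcard1
      have h2 : ((sg.image u).card : ℝ) * (N : ℝ) ^ k ≤ (L + 2 * N : ℝ) ^ k := by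
        exact_mod_cast hcard2
      have h3 : (L + 2 * N : ℝ) ≤ 2 * L := by
        have : (2 * N : ℝ) ≤ L := by exact_mod_cast hLN
        linarith
      calc (sg.card : ℝ) ≤ D * (sg.image u).card := h1
        _ ≤ (δ / 2 ^ (k + 1) * (N : ℝ) ^ k) * (sg.image u).card := by gcongr
        _ = δ / 2 ^ (k + 1) * ((sg.image u).card * (N : ℝ) ^ k) := by ring
        _ ≤ δ / 2 ^ (k + 1) * (2 * L : ℝ) ^ k := by
          gcongr
          exact h2.trans (by gcongr)
        _ = δ / 2 * (L : ℝ) ^ k := by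
          rw [mul_pow, pow_succ]
          field_simp
    rw [hsplit]
    linarith

/-- By the Baire category theorem all rational level sets can be made small simultaneously. -/
lemma exists_smallSet_rat (hk : 1 ≤ k) (hT : IsZkAction T) (hmarker : MarkerProperty T)
    (hmd : mdim X T = 0) (f : C(X, ℝ)) :
    ∃ g : C(X, ℝ), (∀ x, |g x - f x| ≤ 1) ∧ ∀ q : ℚ, SmallSet T {x | g x = q} := by
  let O : ℚ × ℕ → Set C(X, ℝ) := fun p =>
    {h | ∃ L : ℕ, 1 ≤ L ∧ CapLe T {x | h x = p.1} (1 / ((p.2 : ℝ) + 1)) L}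
  have hO : ∀ p, IsOpen (O p) := by
    rintro ⟨q, j⟩
    rw [Metric.isOpen_iff]
    rintro h ⟨L, hL, hcap⟩
    obtain ⟨w, hw, hcap'⟩ := CapLe.thicken hT (fun x => |h x - q|) (by fun_prop)
      (fun x => abs_nonneg _) (hcap.mono fun x hx => by
        simpa [sub_eq_zero] using hx)
    refine ⟨w, hw, fun h' hh' => ⟨L, hL, hcap'.mono fun x hx => ?_⟩⟩
    have h1 := ContinuousMap.dist_apply_le_dist (f := h') (g := h) x
    rw [Metric.mem_ball] at hh'
    rw [Set.mem_ofPred_eq] at hx ⊢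
    rw [hx, Real.dist_eq, abs_sub_comm] at h1
    exact h1.trans hh'.le
  have hD : ∀ p, Dense (O p) := by
    rintro ⟨q, j⟩
    rw [Metric.dense_iff]
    intro h r hr
    obtain ⟨g, hg, hgh, L, hL, hcap⟩ := exists_perturb hk hT hmarker hmd h.continuous q
      (δ := 1 / ((j : ℝ) + 1)) (η := r / 4) (by positivity) (by positivity)
    refine ⟨⟨g, hg⟩, ?_, L, hL, hcap⟩
    rw [Metric.mem_ball]
    refine lt_of_le_of_lt ((ContinuousMap.dist_le (by positivity)).2 fun x => ?_)
      (half_lt_self hr)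
    rw [Real.dist_eq]
    exact (hgh x).trans (by linarith)
  obtain ⟨g, hgf, hg⟩ := (Metric.dense_iff.1 (dense_iInter_of_isOpen hO hD)) f 1 one_pos
  refine ⟨g, fun x => ?_, fun q δ hδ => ?_⟩
  · rw [← Real.dist_eq]
    exact (ContinuousMap.dist_apply_le_dist x).trans (Metric.mem_ball.1 hgf).le
  · obtain ⟨j, hj⟩ := exists_nat_one_div_lt hδ
    obtain ⟨L, hL, hcap⟩ := Set.mem_iInter.1 hg (q, j)
    exact ⟨L, hL, hcap.mono_const hj.le⟩

end Density

/-! ### Functions taking dyadic values most of the time -/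

/-- The staircase sending most of `[n, n+1]` to `{n, n+1}`, with slope `A` around `n + 1/2`. -/
noncomputable def stairA (A : ℕ) (t : ℝ) : ℝ :=
  ⌊t⌋ + min 1 (max 0 (A * (Int.fract t - 1 / 2) + 1 / 2))

lemma continuous_stairA {A : ℕ} (hA : 1 ≤ A) : Continuous (stairA A) := by
  have hu : ContinuousOn (fun f : ℝ => min 1 (max 0 (A * (f - 1 / 2) + 1 / 2)) - f) (Icc 0 1) := by
    fun_prop
  have hA' : (1 : ℝ) ≤ A := by exact_mod_cast hA
  have e0 : min 1 (max 0 ((A : ℝ) * (0 - 1 / 2) + 1 / 2)) = 0 := by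
    rw [max_eq_left (by linarith)]; simp
  have e1 : min 1 (max 0 ((A : ℝ) * (1 - 1 / 2) + 1 / 2)) = 1 :=
    min_eq_left (le_max_of_le_right (by linarith))
  have h1 := hu.comp_fract'' (by rw [e0, e1]; norm_num)
  have h2 := continuous_id.add h1
  convert h2 using 1
  funext t
  simp only [stairA, Pi.add_apply, Function.comp, id]
  have := Int.floor_add_fract t
  linarith

lemma abs_stairA_sub_le (A : ℕ) (t : ℝ) : |stairA A t - t| ≤ 1 := by
  have h3 := Int.floor_add_fract t
  have h4 := Int.fract_nonneg t
  have h5 := Int.fract_lt_one t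
  unfold stairA
  set c := min 1 (max 0 ((A : ℝ) * (Int.fract t - 1 / 2) + 1 / 2)) with hc
  have h6 : c ≤ 1 := min_le_left _ _
  have h7 : 0 ≤ c := le_min zero_le_one (le_max_left _ _)
  rw [abs_le]
  constructor <;> linarith

lemma stairA_intCast {A : ℕ} (hA : 1 ≤ A) (n : ℤ) : stairA A n = n := by
  have hA' : (1 : ℝ) ≤ A := by exact_mod_cast hA
  rw [stairA, Int.fract_intCast, Int.floor_intCast, max_eq_left (by linarith)]
  simp

lemma stairA_mem_int {A : ℕ} {t : ℝ} (h : 1 ≤ 2 * A * |Int.fract t - 1 / 2|) :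
    ∃ n : ℤ, stairA A t = n := by
  unfold stairA
  rcases abs_cases (Int.fract t - 1 / 2 : ℝ) with ⟨h1, h2⟩ | ⟨h1, h2⟩
  · rw [h1] at h
    rw [min_eq_left (le_max_of_le_right (by linarith))]
    exact ⟨⌊t⌋ + 1, by push_cast; rfl⟩
  · rw [h1] at h
    rw [max_eq_left (by linarith)]
    exact ⟨⌊t⌋, by simp⟩

lemma stairA_preimage {A : ℕ} (hA : 1 ≤ A) (y : ℚ) (hy : ∀ n : ℤ, (y : ℝ) ≠ n) :
    ∃ q : ℚ, (∀ n : ℤ, (q : ℝ) ≠ n) ∧ ∀ t : ℝ, stairA A t = y → t = q := by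
  have hA' : (1 : ℝ) ≤ A := by exact_mod_cast hA
  have hA0 : (0 : ℝ) < A := by linarith
  have hfl : (⌊(y : ℝ)⌋ : ℝ) = (⌊y⌋ : ℝ) := by rw [Rat.floor_cast]
  refine ⟨⌊y⌋ + 1 / 2 + ((y - ⌊y⌋) - 1 / 2) / A, fun n => ?_, fun t ht => ?_⟩
  · have f0 : (⌊(y : ℝ)⌋ : ℝ) < y := lt_of_le_of_ne (Int.floor_le _) (hy _).symm
    have f1 := Int.lt_floor_add_one (y : ℝ)
    rw [hfl] at f0 f1
    push_cast
    have g1 : |((y : ℝ) - ⌊y⌋ - 1 / 2) / A| < 1 / 2 := by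
      rw [abs_div, abs_of_pos hA0, div_lt_iff₀ hA0]
      have : |(y : ℝ) - ⌊y⌋ - 1 / 2| < 1 / 2 := by rw [abs_lt]; constructor <;> linarith
      nlinarith
    rw [abs_lt] at g1
    intro h
    have a1 : (⌊y⌋ : ℝ) < n := by linarith
    have a2 : (n : ℝ) < (⌊y⌋ : ℝ) + 1 := by linarith
    have b1 : ⌊y⌋ < n := by exact_mod_cast a1
    have b2 : n < ⌊y⌋ + 1 := by exact_mod_cast a2
    omega
  · unfold stairA at ht
    rcases le_or_gt ((A : ℝ) * (Int.fract t - 1 / 2) + 1 / 2) 0 with h0 | h0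
    · rw [max_eq_left h0] at ht
      exact absurd ht.symm (by simpa using hy ⌊t⌋)
    rw [max_eq_right h0.le] at ht
    rcases le_or_gt 1 ((A : ℝ) * (Int.fract t - 1 / 2) + 1 / 2) with h1 | h1
    · rw [min_eq_left h1] at ht
      exact absurd ht.symm (by exact_mod_cast hy (⌊t⌋ + 1))
    rw [min_eq_right h1.le] at ht
    have hf : ⌊(y : ℝ)⌋ = ⌊t⌋ := by
      rw [Int.floor_eq_iff]
      constructor <;> linarith
    have h2 := Int.floor_add_fract t
    push_cast
    rw [← hfl, hf]
    have h3 : (y : ℝ) - ⌊t⌋ - 1 / 2 = A * (Int.fract t - 1 / 2) := by linarith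
    rw [h3, mul_div_cancel_left₀ _ hA0.ne']
    linarith

/-- The rational levels of `h` outside `2^{-j} ℤ` have zero capacity. -/
def DyadicInv {k : ℕ} {X : Type*} (T : (Fin k → ℤ) → X → X) (j : ℕ) (h : X → ℝ) : Prop :=
  ∀ q : ℚ, (∀ n : ℤ, (2 : ℝ) ^ j * q ≠ n) → SmallSet T {x | h x = q}

/-- Along every orbit, `h` takes values in `2^{-j} ℤ` outside a set of times of density at most
`2^{-j}`, uniformly at some scale. -/
def NiceFn {k : ℕ} {X : Type*} (T : (Fin k → ℤ) → X → X) (h : X → ℝ) : Prop :=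
  ∀ j : ℕ, ∃ L : ℕ, 1 ≤ L ∧ CapLe T {x | ¬ ∃ n : ℤ, (2 : ℝ) ^ j * h x = n} (1 / 2 ^ j) L

section Stair

variable {k : ℕ} {X : Type*} [MetricSpace X] [CompactSpace X] {T : (Fin k → ℤ) → X → X}

lemma dyadic_step (hT : IsZkAction T) (j : ℕ) (h : C(X, ℝ)) (hI : DyadicInv T j h) :
    ∃ h' : C(X, ℝ), DyadicInv T (j + 1) h' ∧ (∀ x, |h' x - h x| ≤ 1 / 2 ^ j) ∧
      (∀ x, (∃ n : ℤ, (2 : ℝ) ^ j * h x = n) → h' x = h x) ∧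
      ∃ L : ℕ, 1 ≤ L ∧ CapLe T {x | ¬ ∃ n : ℤ, (2 : ℝ) ^ j * h' x = n} (1 / 2 ^ j) L := by
  have hp : (0 : ℝ) < 2 ^ j := by positivity
  let θ : X → ℝ := fun x => |Int.fract ((2 : ℝ) ^ j * h x) - 1 / 2|
  have hθ : Continuous θ := by
    have hu : ContinuousOn (fun f : ℝ => |f - 1 / 2|) (Icc 0 1) := by fun_prop
    have h1 := hu.comp_fract'' (by norm_num [abs_of_pos, abs_of_neg])
    exact h1.comp (continuous_const.mul h.continuous)
  obtain ⟨B, hB⟩ : ∃ B : ℕ, ∀ x, |(2 : ℝ) ^ j * h x| ≤ B := by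
    obtain ⟨B, hB⟩ := exists_nat_ge (2 ^ j * ‖h‖)
    refine ⟨B, fun x => ?_⟩
    rw [abs_mul, abs_of_pos hp]
    refine le_trans ?_ hB
    gcongr
    exact h.norm_coe_le_norm x
  have hsmall : SmallSet T {x | θ x = 0} := by
    have h1 := SmallSet.biUnion hT (Finset.Icc (-(B : ℤ) - 1) B)
      (fun i => {x | h x = (((i : ℚ) + 1 / 2) / 2 ^ j : ℚ)}) (by
        intro i _
        refine hI _ fun n hn => ?_
        push_cast at hn
        rw [mul_div_cancel₀ _ hp.ne'] at hn
        have h2 : (2 * i + 1 : ℤ) = 2 * n := by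
          have : (2 * i + 1 : ℝ) = 2 * n := by linarith
          exact_mod_cast this
        omega)
    refine h1.mono fun x hx => ?_
    have h2 : Int.fract ((2 : ℝ) ^ j * h x) = 1 / 2 := by
      simpa [θ, sub_eq_zero] using hx
    have h3 := Int.floor_add_fract ((2 : ℝ) ^ j * h x)
    have h4 := abs_le.1 (hB x)
    refine Set.mem_iUnion₂.2 ⟨⌊(2 : ℝ) ^ j * h x⌋, ?_, ?_⟩
    · rw [Finset.mem_Icc]
      constructor
      · have : (-(B : ℝ) - 1) ≤ ⌊(2 : ℝ) ^ j * h x⌋ := by linarith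
        exact_mod_cast this
      · have : (⌊(2 : ℝ) ^ j * h x⌋ : ℝ) ≤ B := by linarith
        exact_mod_cast this
    · rw [Set.mem_ofPred_eq]
      push_cast
      rw [eq_div_iff hp.ne', mul_comm]
      linarith
  obtain ⟨L, hL, hcap⟩ := hsmall (1 / 2 ^ j) (by positivity)
  obtain ⟨w, hw, hcap'⟩ := hcap.thicken hT θ hθ (fun x => abs_nonneg _)
  obtain ⟨A, hA⟩ := exists_nat_ge (max 1 (1 / (2 * w)))
  have hA1 : 1 ≤ A := by exact_mod_cast (le_max_left _ _).trans hA
  have hAw : 1 ≤ 2 * A * w := by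
    have := (le_max_right _ _).trans hA
    rw [div_le_iff₀ (by positivity)] at this
    linarith
  let h' : C(X, ℝ) := ⟨fun x => stairA A (2 ^ j * h x) / 2 ^ j,
    ((continuous_stairA hA1).comp (continuous_const.mul h.continuous)).div_const _⟩
  have hh' : ∀ x, (2 : ℝ) ^ j * h' x = stairA A (2 ^ j * h x) := fun x =>
    mul_div_cancel₀ _ hp.ne'
  refine ⟨h', ?_, ?_, ?_, L, hL, ?_⟩
  · intro q hq
    obtain ⟨q', hq', hpre⟩ := stairA_preimage hA1 (2 ^ j * q) (by
      intro n hn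
      push_cast at hn
      refine hq (2 * n) ?_
      push_cast
      rw [pow_succ, ← hn]
      ring)
    refine (hI (q' / 2 ^ j) (by
      intro n hn
      push_cast at hn
      rw [mul_div_cancel₀ _ hp.ne'] at hn
      exact hq' n hn)).mono fun x hx => ?_
    have h1 := hpre (2 ^ j * h x) (by
      rw [← hh', show h' x = q from hx]
      push_cast
      rfl)
    rw [Set.mem_ofPred_eq]
    push_cast
    rw [eq_div_iff hp.ne', mul_comm]
    exact h1
  · intro x
    have h1 := abs_stairA_sub_le A (2 ^ j * h x)
    rw [← hh', ← mul_sub, abs_mul, abs_of_pos hp] at h1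
    rw [le_div_iff₀ hp]
    linarith
  · rintro x ⟨n, hn⟩
    have h1 := hh' x
    rw [hn, stairA_intCast hA1, ← hn] at h1
    exact mul_left_cancel₀ hp.ne' h1
  · refine hcap'.mono fun x hx => ?_
    rw [Set.mem_ofPred_eq] at hx ⊢
    by_contra hcon
    push Not at hcon
    refine hx ?_
    rw [hh']
    refine stairA_mem_int (hAw.trans ?_)
    gcongr

/-- Iterating staircases at scales `1, 1/2, 1/4, …` moves a function whose rational levels are
small to a nice one. -/
lemma exists_nice_of_small (hT : IsZkAction T) (g : C(X, ℝ)) (hg : DyadicInv T 0 g) :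
    ∃ h : C(X, ℝ), (∀ x, |h x - g x| ≤ 2) ∧ NiceFn T h := by
  choose! st hst1 hst2 hst3 hst4 using dyadic_step (X := X) hT
  let H : ℕ → C(X, ℝ) := fun j => Nat.rec g (fun j h => st j h) j
  have hH : ∀ j, DyadicInv T j (H j) := by
    intro j
    induction j with
    | zero => exact hg
    | succ j ih => exact hst1 j _ ih
  have hd : ∀ j, dist (H j) (H (j + 1)) ≤ 1 * (1 / 2) ^ j := by
    intro j
    rw [ContinuousMap.dist_le (by positivity)]
    intro x
    rw [dist_comm, Real.dist_eq, one_mul, one_div_pow]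
    exact hst2 j _ (hH j) x
  obtain ⟨h, hh⟩ := cauchySeq_tendsto_of_complete
    (cauchySeq_of_le_geometric (1 / 2) 1 (by norm_num) hd)
  have hx : ∀ x, Tendsto (fun j => H j x) atTop (𝓝 (h x)) := fun x =>
    ((continuous_eval_const x).tendsto h).comp hh
  refine ⟨h, fun x => ?_, fun j => ?_⟩
  · have h1 := dist_le_of_le_geometric_of_tendsto₀ (1 / 2) 1 (by norm_num) hd hh
    rw [← Real.dist_eq, dist_comm]
    refine (ContinuousMap.dist_apply_le_dist x).trans (h1.trans (by norm_num))
  · obtain ⟨L, hL, hcap⟩ := hst4 j _ (hH j)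
    refine ⟨L, hL, hcap.mono fun x hxn hcon => hxn ?_⟩
    obtain ⟨n, hn⟩ := hcon
    refine ⟨n, ?_⟩
    have hconst : ∀ i, H (j + 1 + i) x = H (j + 1) x := by
      intro i
      induction i with
      | zero => rfl
      | succ i ih =>
        rw [← ih]
        refine hst3 (j + 1 + i) _ (hH _) x ⟨2 ^ (i + 1) * n, ?_⟩
        rw [ih]
        push_cast
        rw [← hn]
        simp only [H]
        ring
    have hlim : Tendsto (fun i => H (j + 1 + i) x) atTop (𝓝 (h x)) := by
      have := (tendsto_add_atTop_iff_nat (j + 1)).2 (hx x)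
      refine this.congr fun i => ?_
      rw [add_comm]
    have : h x = H (j + 1) x := by
      refine tendsto_nhds_unique hlim ?_
      simp only [hconst]
      exact tendsto_const_nhds
    rw [this]
    exact hn

lemma exists_nice (hk : 1 ≤ k) (hT : IsZkAction T) (hmarker : MarkerProperty T)
    (hmd : mdim X T = 0) (f : C(X, ℝ)) :
    ∃ h : C(X, ℝ), (∀ x, |h x - f x| ≤ 3) ∧ NiceFn T h := by
  obtain ⟨g, hgf, hg⟩ := exists_smallSet_rat hk hT hmarker hmd f
  obtain ⟨h, hhg, hh⟩ := exists_nice_of_small hT g fun q _ => hg q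
  refine ⟨h, fun x => ?_, hh⟩
  have h1 := hgf x
  have h2 := hhg x
  have h3 := abs_sub_le (h x) (g x) (f x)
  linarith

end Stair

/-! ### Counting names -/

/-- Kraft-type counting: words of small total level are exponentially few, at a rate depending only
on the constant `c` which makes the weights `c · 4^{-level}` of the letters add up to at most `1`. -/
lemma card_words_le {ι α : Type*} [Fintype ι] [DecidableEq ι] (A : Finset α) (lev : α → ℕ)
    {c : ℝ} (hc : 0 < c) (hsum : ∑ a ∈ A, c * (1 / 4) ^ lev a ≤ 1) :
    ((((Fintype.piFinset fun _ : ι => A).filter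
      fun w => ∑ b, lev (w b) ≤ 2 * Fintype.card ι).card : ℕ) : ℝ) ≤
      (16 / c) ^ Fintype.card ι := by
  set n := Fintype.card ι
  set W := (Fintype.piFinset fun _ : ι => A).filter fun w => ∑ b, lev (w b) ≤ 2 * n
  have h1 : (W.card : ℝ) * (c / 16) ^ n ≤ 1 := by
    calc (W.card : ℝ) * (c / 16) ^ n = ∑ w ∈ W, (c / 16) ^ n := by simp
      _ ≤ ∑ w ∈ W, ∏ b, c * (1 / 4 : ℝ) ^ lev (w b) := by
        refine Finset.sum_le_sum fun w hw => ?_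
        rw [Finset.prod_mul_distrib, Finset.prod_pow_eq_pow_sum, Finset.prod_const,
          Finset.card_univ]
        have h2 : (1 / 4 : ℝ) ^ (2 * n) ≤ (1 / 4) ^ ∑ b, lev (w b) :=
          pow_le_pow_of_le_one (by norm_num) (by norm_num) (Finset.mem_filter.1 hw).2
        calc (c / 16) ^ n = c ^ n * (1 / 4 : ℝ) ^ (2 * n) := by
              rw [pow_mul, ← mul_pow]; congr 1; ring
          _ ≤ _ := by gcongr
      _ ≤ ∑ w ∈ Fintype.piFinset fun _ : ι => A, ∏ b, c * (1 / 4 : ℝ) ^ lev (w b) :=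
        Finset.sum_le_sum_of_subset_of_nonneg (Finset.filter_subset _ _)
          fun w _ _ => Finset.prod_nonneg fun b _ => by positivity
      _ = (∑ a ∈ A, c * (1 / 4 : ℝ) ^ lev a) ^ n := by
        rw [← Finset.prod_univ_sum (fun _ : ι => A) (fun _ a => c * (1 / 4 : ℝ) ^ lev a)]
        simp [n]
      _ ≤ 1 := pow_le_one₀ (Finset.sum_nonneg fun a _ => by positivity) hsum
  have h3 : (16 / c) ^ n * (c / 16) ^ n = 1 := by
    rw [← mul_pow]
    have : 16 / c * (c / 16) = 1 := by field_simp
    rw [this, one_pow]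
  have h4 : 0 < (c / 16) ^ n := by positivity
  refine le_of_mul_le_mul_right ?_ h4
  rw [h3]
  exact h1

open Classical in
/-- The number of `j < J` with `y ∉ 2^{-j} ℤ`, that is, the least such `j` with `y ∈ 2^{-j} ℤ`,
capped at `J`. -/
noncomputable def dyadicLevel (J : ℕ) (y : ℝ) : ℕ :=
  ((Finset.range J).filter fun j => ¬ ∃ n : ℤ, (2 : ℝ) ^ j * y = n).card

lemma dyadicLevel_le (J : ℕ) (y : ℝ) : dyadicLevel J y ≤ J := by
  classical
  exact (Finset.card_filter_le _ _).trans (Finset.card_range J).le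

lemma dyadicLevel_spec (J : ℕ) (y : ℝ) :
    |y - ⌊(2 : ℝ) ^ dyadicLevel J y * y⌋ / 2 ^ dyadicLevel J y| ≤ 1 / 2 ^ J := by
  classical
  have hp : ∀ j : ℕ, (0 : ℝ) < 2 ^ j := fun j => by positivity
  by_cases h : ∃ n : ℤ, (2 : ℝ) ^ dyadicLevel J y * y = n
  · obtain ⟨n, hn⟩ := h
    rw [hn, Int.floor_intCast, ← hn, mul_div_cancel_left₀ _ (hp _).ne', sub_self, abs_zero]
    positivity
  · have hJ : dyadicLevel J y = J := by
      refine le_antisymm (dyadicLevel_le J y) (not_lt.1 fun hlt => ?_)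
      have hsub : Finset.range (dyadicLevel J y + 1) ⊆
          (Finset.range J).filter fun j => ¬ ∃ n : ℤ, (2 : ℝ) ^ j * y = n := by
        intro j hj
        rw [Finset.mem_range] at hj
        refine Finset.mem_filter.2 ⟨Finset.mem_range.2 (by omega), fun ⟨n, hn⟩ => h ?_⟩
        obtain ⟨i, hi⟩ := Nat.exists_eq_add_of_le (Nat.lt_succ_iff.1 hj)
        refine ⟨2 ^ i * n, ?_⟩
        rw [hi]
        push_cast
        rw [← hn]
        ring
      have := Finset.card_le_card hsub
      rw [Finset.card_range] at this
      change dyadicLevel J y + 1 ≤ dyadicLevel J y at this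
      omega
    rw [hJ]
    have h1 := Int.floor_le ((2 : ℝ) ^ J * y)
    have h2 := Int.lt_floor_add_one ((2 : ℝ) ^ J * y)
    have h3 : y - ⌊(2 : ℝ) ^ J * y⌋ / 2 ^ J = ((2 : ℝ) ^ J * y - ⌊(2 : ℝ) ^ J * y⌋) / 2 ^ J := by
      field_simp
    rw [h3, abs_div, abs_of_pos (hp J)]
    gcongr
    rw [abs_le]
    constructor <;> linarith

/-- A nice function has boundedly many names per site, at all precisions `2^{-J}` with the same
exponential rate `C`. -/
lemma exists_names {k : ℕ} {X : Type*} [TopologicalSpace X] {T : (Fin k → ℤ) → X → X}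
    (hT : IsZkAction T) {h : X → ℝ} (hh : NiceFn T h) {R : ℕ} (hR : ∀ x, |h x| ≤ R) :
    ∃ C : ℝ, 0 ≤ C ∧ ∀ J : ℕ, ∃ L : ℕ, 1 ≤ L ∧ ∀ q : ℕ, ∃ 𝒩 : Finset ((Fin k → ℤ) → ℝ),
      (𝒩.card : ℝ) ≤ Real.exp (C * ((L * q : ℕ) : ℝ) ^ k) ∧
      ∀ x, ∃ ν ∈ 𝒩, ∀ m ∈ box k (L * q), |h (T m x) - ν m| ≤ 1 / 2 ^ J := by
  classical
  obtain ⟨c, hc⟩ : ∃ c : ℝ, c = 1 / (2 * (2 * R + 1)) := ⟨_, rfl⟩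
  have hc0 : 0 < c := by rw [hc]; positivity
  have hc1 : 1 ≤ 16 / c := by
    rw [hc, div_div_eq_mul_div, div_one]
    have : (0 : ℝ) ≤ R := by positivity
    linarith
  refine ⟨Real.log (16 / c), Real.log_nonneg hc1, fun J => ?_⟩
  choose Lj hLj hcap using hh
  refine ⟨∏ j ∈ Finset.range J, Lj j, Finset.one_le_prod' fun j _ => hLj j, fun q => ?_⟩
  set n := (∏ j ∈ Finset.range J, Lj j) * q with hn
  have hcap' : ∀ j ∈ Finset.range J,
      CapLe T {x | ¬ ∃ n : ℤ, (2 : ℝ) ^ j * h x = n} (1 / 2 ^ j) n := by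
    intro j hj
    obtain ⟨r, hr⟩ := Finset.dvd_prod_of_mem Lj hj
    rw [hn, hr, mul_assoc]
    exact (hcap j).mul hT (hLj j) _
  let A : Finset (Σ _ : ℕ, ℤ) := (Finset.range (J + 1)).sigma fun j =>
    Finset.Icc (-(R * 2 ^ j : ℤ)) (R * 2 ^ j)
  have hA : ∑ a ∈ A, c * (1 / 4 : ℝ) ^ a.1 ≤ 1 := by
    simp only [A]
    rw [Finset.sum_sigma]
    have h1 : ∀ j ∈ Finset.range (J + 1), (∑ a ∈ Finset.Icc (-(R * 2 ^ j : ℤ)) (R * 2 ^ j),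
        c * (1 / 4 : ℝ) ^ j) ≤ c * (2 * R + 1) * (1 / 2) ^ j := by
      intro j _
      rw [Finset.sum_const, Int.card_Icc, nsmul_eq_mul]
      have h2 : (((R * 2 ^ j + 1 - -(R * 2 ^ j : ℤ)).toNat : ℕ) : ℝ) = 2 * R * 2 ^ j + 1 := by
        have : (R * 2 ^ j + 1 - -(R * 2 ^ j : ℤ)).toNat = 2 * R * 2 ^ j + 1 := by
          have : (R * 2 ^ j + 1 - -(R * 2 ^ j : ℤ)) = ((2 * R * 2 ^ j + 1 : ℕ) : ℤ) := by
            push_cast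
            ring
          rw [this, Int.toNat_natCast]
        rw [this]
        push_cast
        rfl
      rw [h2]
      have h3 : (1 / 4 : ℝ) ^ j = (1 / 2) ^ j * (1 / 2) ^ j := by rw [← mul_pow]; norm_num
      have h4 : (2 : ℝ) ^ j * (1 / 2) ^ j = 1 := by rw [← mul_pow]; norm_num
      have h5 : (1 / 2 : ℝ) ^ j ≤ 1 := pow_le_one₀ (by norm_num) (by norm_num)
      have h6 : (2 * R * 2 ^ j + 1 : ℝ) * (1 / 2) ^ j ≤ 2 * R + 1 := by
        have : (2 * R * 2 ^ j + 1 : ℝ) * (1 / 2) ^ j = 2 * R * (2 ^ j * (1 / 2) ^ j) +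
          (1 / 2) ^ j := by ring
        rw [this, h4]
        linarith
      calc (2 * R * 2 ^ j + 1 : ℝ) * (c * (1 / 4) ^ j)
          = c * ((2 * R * 2 ^ j + 1 : ℝ) * (1 / 2) ^ j) * (1 / 2) ^ j := by rw [h3]; ring
        _ ≤ c * (2 * R + 1) * (1 / 2) ^ j := by gcongr
    refine (Finset.sum_le_sum h1).trans ?_
    rw [← Finset.mul_sum]
    have h7 : ∑ j ∈ Finset.range (J + 1), (1 / 2 : ℝ) ^ j ≤ 2 := sum_geometric_two_le _
    have h8 : c * (2 * R + 1) = 1 / 2 := by rw [hc]; field_simp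
    rw [h8]
    linarith
  let W := (Fintype.piFinset fun _ : ↥(box k n) => A).filter
    fun w => ∑ b, (w b).1 ≤ 2 * Fintype.card ↥(box k n)
  have hW : ((W.card : ℕ) : ℝ) ≤ (16 / c) ^ Fintype.card ↥(box k n) :=
    card_words_le A (fun a => a.1) hc0 hA
  let val : (↥(box k n) → Σ _ : ℕ, ℤ) → (Fin k → ℤ) → ℝ := fun w m =>
    if hm : m ∈ box k n then ((w ⟨m, hm⟩).2 : ℝ) / 2 ^ (w ⟨m, hm⟩).1 else 0
  have hbox : Fintype.card ↥(box k n) = n ^ k := by rw [Fintype.card_coe, card_box]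
  refine ⟨W.image val, ?_, fun x => ?_⟩
  · have h1 : (((W.image val).card : ℕ) : ℝ) ≤ W.card := by exact_mod_cast Finset.card_image_le
    refine h1.trans (hW.trans (le_of_eq ?_))
    rw [hbox, mul_comm, ← Nat.cast_pow, Real.exp_nat_mul, Real.exp_log (by positivity)]
  · let lv : (Fin k → ℤ) → ℕ := fun m => dyadicLevel J (h (T m x))
    let w : ↥(box k n) → Σ _ : ℕ, ℤ := fun b =>
      ⟨lv b.1, ⌊(2 : ℝ) ^ lv b.1 * h (T b.1 x)⌋⟩
    have hlev : ∑ m ∈ box k n, lv m ≤ 2 * n ^ k := by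
      have h1 : ∑ m ∈ box k n, lv m = ∑ j ∈ Finset.range J,
          ((box k n).filter fun m => ¬ ∃ i : ℤ, (2 : ℝ) ^ j * h (T m x) = i).card := by
        simp only [lv, dyadicLevel, Finset.card_filter]
        rw [Finset.sum_comm]
      have h2 : ((∑ m ∈ box k n, lv m : ℕ) : ℝ) ≤ 2 * (n : ℝ) ^ k := by
        rw [h1]
        push_cast
        calc _ ≤ ∑ j ∈ Finset.range J, (1 / 2 : ℝ) ^ j * (n : ℝ) ^ k := by
              refine Finset.sum_le_sum fun j hj => ?_
              rw [one_div_pow]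
              exact hcap' j hj x _ (Finset.filter_subset _ _)
                (fun m hm => (Finset.mem_filter.1 hm).2)
          _ = (∑ j ∈ Finset.range J, (1 / 2 : ℝ) ^ j) * (n : ℝ) ^ k := by rw [Finset.sum_mul]
          _ ≤ 2 * (n : ℝ) ^ k := by
              gcongr
              exact sum_geometric_two_le _
      exact_mod_cast h2
    refine ⟨val w, Finset.mem_image_of_mem _ (Finset.mem_filter.2 ⟨?_, ?_⟩), fun m hm => ?_⟩
    · rw [Fintype.mem_piFinset]
      intro b
      refine Finset.mem_sigma.2 ⟨Finset.mem_range.2 (Nat.lt_succ_of_le (dyadicLevel_le _ _)), ?_⟩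
      have h1 := abs_le.1 (hR (T b.1 x))
      have h2 : (0 : ℝ) < 2 ^ lv b.1 := by positivity
      rw [Finset.mem_Icc]
      constructor
      · rw [Int.le_floor]
        push_cast
        nlinarith
      · have h3 := Int.floor_le ((2 : ℝ) ^ lv b.1 * h (T b.1 x))
        have h4 : ((⌊(2 : ℝ) ^ lv b.1 * h (T b.1 x)⌋ : ℤ) : ℝ) ≤ R * 2 ^ lv b.1 := by nlinarith
        change ⌊(2 : ℝ) ^ lv b.1 * h (T b.1 x)⌋ ≤ R * 2 ^ lv b.1
        exact_mod_cast h4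
    · rw [hbox]
      simp only [w]
      rw [Finset.sum_coe_sort (box k n) lv]
      exact hlev
    · simp only [val, dif_pos hm, w, lv]
      exact dyadicLevel_spec J _

/-! ### Systems separated by finitely many nice functions have finite entropy -/

lemma htop_lt_top_of_nice {k : ℕ} {Y : Type*} [MetricSpace Y] [CompactSpace Y]
    {S : (Fin k → ℤ) → Y → Y} (hS : IsZkAction S) {ι : Type*} [Fintype ι] (g : ι → Y → ℝ)
    (hgc : ∀ i, Continuous (g i)) (hg : ∀ i, NiceFn S (g i))
    (hsep : ∀ y y', (∀ i m, g i (S m y) = g i (S m y')) → y = y') : htop Y S < ⊤ := by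
  classical
  have hbd : ∀ i, ∃ R : ℕ, ∀ y, |g i y| ≤ R := by
    intro i
    obtain ⟨R, hR⟩ := exists_nat_ge ‖(⟨g i, hgc i⟩ : C(Y, ℝ))‖
    exact ⟨R, fun y => ((⟨g i, hgc i⟩ : C(Y, ℝ)).norm_coe_le_norm y).trans hR⟩
  choose R hR using hbd
  choose C hC0 hC using fun i => exists_names hS (hg i) (hR i)
  have hCs : 0 ≤ ∑ i, C i := Finset.sum_nonneg fun i _ => hC0 i
  refine lt_of_le_of_lt ?_ (ENNReal.ofReal_lt_top (r := (∑ i, C i) * 2 ^ k))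
  refine iSup₂_le fun ε hε => ?_
  -- One stage `s` serves both as the radius of the window and as the precision of the values.
  let O : ℕ → Set (Y × Y) := fun s => ⋃ i, ⋃ m ∈ {m : Fin k → ℤ | ∀ l, |m l| ≤ s},
    {z | 4 / 2 ^ s < |g i (S m z.1) - g i (S m z.2)|}
  obtain ⟨s, hs⟩ := exists_separating_stage O (by
      intro s
      refine isOpen_iUnion fun i => isOpen_biUnion fun m _ => isOpen_lt continuous_const ?_
      exact (((hgc i).comp ((hS.cont m).comp continuous_fst)).sub
        ((hgc i).comp ((hS.cont m).comp continuous_snd))).abs) (by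
      intro s s' hss' z hz
      simp only [O, Set.mem_iUnion] at hz ⊢
      obtain ⟨i, m, hm, hz⟩ := hz
      refine ⟨i, m, fun l => (hm l).trans (by exact_mod_cast hss'), ?_⟩
      rw [Set.mem_ofPred_eq] at hz ⊢
      refine lt_of_le_of_lt ?_ hz
      gcongr
      norm_num) (by
      intro y y' hne
      by_contra hcon
      refine hne (hsep y y' fun i m => ?_)
      by_contra hne'
      have hpos : 0 < |g i (S m y) - g i (S m y')| := abs_pos.2 (sub_ne_zero.2 hne')
      obtain ⟨s1, hs1⟩ := exists_pow_lt_of_lt_one (div_pos hpos (by norm_num : (0 : ℝ) < 4))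
        (by norm_num : (1 / 2 : ℝ) < 1)
      refine hcon ⟨s1 + ∑ l, (m l).natAbs, ?_⟩
      simp only [O, Set.mem_iUnion]
      refine ⟨i, m, fun l => ?_, ?_⟩
      · have h1 : (m l).natAbs ≤ ∑ l, (m l).natAbs :=
          Finset.single_le_sum (f := fun l => (m l).natAbs) (fun _ _ => Nat.zero_le _)
            (Finset.mem_univ l)
        rw [Int.abs_eq_natAbs]
        exact_mod_cast h1.trans (Nat.le_add_left _ _)
      · have h1 : (2 : ℝ) ^ s1 ≤ 2 ^ (s1 + ∑ l, (m l).natAbs) :=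
          pow_le_pow_right₀ (by norm_num) (Nat.le_add_right _ _)
        have h2 : (4 : ℝ) / 2 ^ (s1 + ∑ l, (m l).natAbs) ≤ 4 / 2 ^ s1 := by gcongr
        rw [Set.mem_ofPred_eq]
        refine lt_of_le_of_lt h2 ?_
        rw [one_div_pow, lt_div_iff₀ (by norm_num)] at hs1
        calc (4 : ℝ) / 2 ^ s1 = 1 / 2 ^ s1 * 4 := by ring
          _ < _ := hs1) hε
  choose Li hLi hnames using fun i => hC i s
  let n := (∏ i, Li i) * (4 * s + 1)
  have hL1 : 1 ≤ ∏ i, Li i := Finset.one_le_prod' fun i _ => hLi i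
  have hn : 4 * s + 1 ≤ n := Nat.le_mul_of_pos_left _ hL1
  have hnm : ∀ i, ∃ 𝒩 : Finset ((Fin k → ℤ) → ℝ),
      (𝒩.card : ℝ) ≤ Real.exp (C i * (n : ℝ) ^ k) ∧
      ∀ x, ∃ ν ∈ 𝒩, ∀ m ∈ box k n, |g i (S m x) - ν m| ≤ 1 / 2 ^ s := by
    intro i
    obtain ⟨r, hr⟩ := Finset.dvd_prod_of_mem Li (Finset.mem_univ i)
    have : n = Li i * (r * (4 * s + 1)) := by
      simp only [n]
      rw [hr, mul_assoc]
    rw [this]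
    exact hnames i _
  choose 𝒩 hcard hcov using hnm
  let N := n - 2 * s
  have hN : 1 ≤ N := by simp only [N]; omega
  let ctr : Fin k → ℤ := fun _ => (s : ℤ)
  let I := Fintype.piFinset 𝒩
  let U : (ι → (Fin k → ℤ) → ℝ) → Set Y := fun ν =>
    ⋂ i, ⋂ m ∈ box k n, {y | |g i (S (m - ctr) y) - ν i m| < 2 / 2 ^ s}
  have hcn : coverNum Y (blockRho S dist N) ε ≤ I.card := by
    refine Nat.sInf_le ⟨fun j => U (I.equivFin.symm j), fun j => ?_, ?_, fun j y hy y' hy' => ?_⟩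
    · refine isOpen_iInter_of_finite fun i => (box k n).finite_toSet.isOpen_biInter fun m _ => ?_
      exact isOpen_lt (((hgc i).comp (hS.cont _)).sub continuous_const).abs continuous_const
    · rw [Set.eq_univ_iff_forall]
      intro y
      choose ν hν1 hν2 using fun i => hcov i (S (-ctr) y)
      refine Set.mem_iUnion.2 ⟨I.equivFin ⟨ν, Fintype.mem_piFinset.2 hν1⟩, ?_⟩
      simp only [Equiv.symm_apply_apply, U, Set.mem_iInter]
      intro i m hm
      have h1 := hν2 i m hm
      rw [← hS.map_add, ← sub_eq_add_neg] at h1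
      exact lt_of_le_of_lt h1 (by gcongr; norm_num)
    · rw [blockRho_lt_iff S dist hN]
      intro a
      by_contra hcon
      have h1 := hs _ _ (not_lt.1 hcon)
      simp only [O, Set.mem_iUnion] at h1
      obtain ⟨i, m, hm, h1⟩ := h1
      rw [Set.mem_ofPred_eq] at hm h1
      have hmem : m + (fun l => (a l : ℤ)) + ctr ∈ box k n := by
        rw [mem_box]
        intro l
        have h2 := abs_le.1 (hm l)
        have h3 := (a l).2
        simp only [Pi.add_apply, ctr]
        constructor <;> omega
      have e1 := Set.mem_iInter₂.1 (Set.mem_iInter.1 hy i) _ hmem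
      have e2 := Set.mem_iInter₂.1 (Set.mem_iInter.1 hy' i) _ hmem
      rw [Set.mem_ofPred_eq, add_sub_cancel_right, hS.map_add] at e1 e2
      rw [abs_sub_comm] at e2
      have e3 := abs_sub_le (g i (S m (S (fun l => (a l : ℤ)) y)))
        ((I.equivFin.symm j : ι → (Fin k → ℤ) → ℝ) i (m + (fun l => (a l : ℤ)) + ctr))
        (g i (S m (S (fun l => (a l : ℤ)) y')))
      have e4 : (4 : ℝ) / 2 ^ s = 2 / 2 ^ s + 2 / 2 ^ s := by ring
      linarith
  have hIcard : (I.card : ℝ) ≤ Real.exp ((∑ i, C i) * (n : ℝ) ^ k) := by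
    rw [Fintype.card_piFinset]
    push_cast
    rw [Finset.sum_mul, Real.exp_sum]
    exact Finset.prod_le_prod (fun i _ => by positivity) fun i _ => hcard i
  have hnN : (n : ℝ) ≤ 2 * N := by
    have : n ≤ 2 * N := by simp only [N]; omega
    exact_mod_cast this
  have hlog : Real.log (coverNum Y (blockRho S dist N) ε : ℝ) ≤
      (∑ i, C i) * 2 ^ k * (N : ℝ) ^ k := by
    have h0 : 0 ≤ (∑ i, C i) * 2 ^ k * (N : ℝ) ^ k := by positivity
    rcases Nat.eq_zero_or_pos (coverNum Y (blockRho S dist N) ε) with h1 | h1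
    · rw [h1]
      simpa using h0
    · rw [Real.log_le_iff_le_exp (by exact_mod_cast h1)]
      have h2 : ((coverNum Y (blockRho S dist N) ε : ℕ) : ℝ) ≤ I.card := by exact_mod_cast hcn
      refine h2.trans (hIcard.trans (Real.exp_le_exp.2 ?_))
      rw [mul_assoc, ← mul_pow]
      gcongr
  refine (iInf₂_le N hN).trans ?_
  have hN0 : (N : ℝ≥0∞) ^ k ≠ 0 := by
    have : N ≠ 0 := by omega
    simp [this]
  rw [ENNReal.div_le_iff hN0 (by finiteness)]
  have h4 : (N : ℝ≥0∞) ^ k = ENNReal.ofReal ((N : ℝ) ^ k) := by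
    rw [ENNReal.ofReal_pow (by positivity), ENNReal.ofReal_natCast]
  rw [h4, ← ENNReal.ofReal_mul (by positivity)]
  exact ENNReal.ofReal_le_ofReal hlog

/-! ### The inverse limit -/

lemma exists_separating_nice {k : ℕ} {X : Type*} [MetricSpace X] [CompactSpace X]
    {T : (Fin k → ℤ) → X → X} (hk : 1 ≤ k) (hT : IsZkAction T) (hmarker : MarkerProperty T)
    (hmd : mdim X T = 0) :
    ∃ h : ℕ → X → ℝ, (∀ i, Continuous (h i)) ∧ (∀ i, NiceFn T (h i)) ∧
      ∀ x y, (∀ i, h i x = h i y) → x = y := by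
  rcases isEmpty_or_nonempty X with hX | hX
  · refine ⟨fun _ _ => 0, fun _ => continuous_const, fun i j => ⟨1, le_rfl, fun x => ?_⟩,
      fun x => ?_⟩
    · exact (hX.false x).elim
    · exact (hX.false x).elim
  let f : ℕ → ℕ → C(X, ℝ) := fun i K =>
    ⟨fun x => K * dist x (TopologicalSpace.denseSeq X i), by fun_prop⟩
  choose H hHf hH using fun i K => exists_nice hk hT hmarker hmd (f i K)
  refine ⟨fun n => H (Nat.unpair n).1 (Nat.unpair n).2, fun n => ContinuousMap.continuous _,
    fun n => hH _ _, fun x y hxy => ?_⟩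
  by_contra hne
  have hr : 0 < dist x y := dist_pos.2 hne
  obtain ⟨i, hi⟩ := (TopologicalSpace.denseRange_denseSeq X).exists_dist_lt x
    (by positivity : 0 < dist x y / 4)
  obtain ⟨K, hK⟩ := exists_nat_gt (6 / (dist x y / 2))
  rw [div_lt_iff₀ (by positivity)] at hK
  have h1 := hxy (Nat.pair i K)
  simp only [Nat.unpair_pair] at h1
  have h2 := abs_le.1 (hHf i K x)
  have h3 := abs_le.1 (hHf i K y)
  simp only [f, ContinuousMap.coe_mk] at h2 h3
  have h4 := dist_triangle_right x y (TopologicalSpace.denseSeq X i)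
  have h5 : dist x y / 2 ≤
      dist y (TopologicalSpace.denseSeq X i) - dist x (TopologicalSpace.denseSeq X i) := by
    linarith
  have h6 : (K : ℝ) * (dist x y / 2) ≤ K *
      (dist y (TopologicalSpace.denseSeq X i) - dist x (TopologicalSpace.denseSeq X i)) := by
    gcongr
  rw [mul_sub] at h6
  linarith

section Names

variable {k : ℕ} {X : Type*} [TopologicalSpace X] {T : (Fin k → ℤ) → X → X}

/-- The itinerary of `x` under the first `n` functions `h i`, padded by zeros. -/
noncomputable def nameMap (T : (Fin k → ℤ) → X → X) (h : ℕ → X → ℝ) (n : ℕ) (x : X) :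
    (Fin k → ℤ) → ℕ → ℝ :=
  fun g i => if i < n then h i (T g x) else 0

lemma continuous_nameMap (hT : IsZkAction T) {h : ℕ → X → ℝ} (hc : ∀ i, Continuous (h i))
    (n : ℕ) : Continuous (nameMap T h n) := by
  refine continuous_pi fun g => continuous_pi fun i => ?_
  unfold nameMap
  split_ifs
  · exact (hc i).comp (hT.cont g)
  · exact continuous_const

lemma nameMap_act (hT : IsZkAction T) (h : ℕ → X → ℝ) (n : ℕ) (a : Fin k → ℤ) (x : X) :
    nameMap T h n (T a x) = fun g => nameMap T h n x (g + a) := by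
  funext g i
  simp only [nameMap]
  rw [hT.map_add]

variable [CompactSpace X]

/-- The factor of `X` consisting of the itineraries under the first `n` functions, with the shift
action. -/
noncomputable def nameSys (hT : IsZkAction T) (h : ℕ → X → ℝ) (hc : ∀ i, Continuous (h i))
    (n : ℕ) : ZkSystem k where
  carrier := range (nameMap T h n)
  met := TopologicalSpace.metrizableSpaceMetric (range (nameMap T h n))
  cpt := isCompact_iff_compactSpace.1 (isCompact_range (continuous_nameMap hT hc n))
  act a y := ⟨fun g => y.1 (g + a), by
    obtain ⟨_, x, rfl⟩ := y
    exact ⟨T a x, nameMap_act hT h n a x⟩⟩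
  isAction :=
    { cont := fun a => by
        have : Continuous fun y : range (nameMap T h n) =>
            (fun g => y.1 (g + a) : (Fin k → ℤ) → ℕ → ℝ) :=
          continuous_pi fun g => (continuous_apply (g + a)).comp continuous_subtype_val
        exact this.subtype_mk _
      map_zero := fun y => Subtype.ext (by funext g; simp)
      map_add := fun a b y => Subtype.ext (by
        funext g
        simp only
        rw [add_assoc]) }

/-- The point of the factor `nameSys` given by the itinerary of `x`. -/
noncomputable def toNameSys (hT : IsZkAction T) (h : ℕ → X → ℝ) (hc : ∀ i, Continuous (h i))
    (n : ℕ) (x : X) : (nameSys hT h hc n).carrier :=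
  ⟨nameMap T h n x, x, rfl⟩

variable (hT : IsZkAction T) (h : ℕ → X → ℝ) (hc : ∀ i, Continuous (h i)) (n : ℕ)

lemma continuous_toNameSys : Continuous (toNameSys hT h hc n) := by
  have : Continuous fun x => (⟨nameMap T h n x, x, rfl⟩ : range (nameMap T h n)) :=
    (continuous_nameMap hT hc n).subtype_mk _
  exact this

lemma continuous_nameSys_val : Continuous fun y : (nameSys hT h hc n).carrier => y.1 := by
  have : Continuous fun y : range (nameMap T h n) => y.1 := continuous_subtype_val
  exact this

lemma toNameSys_surjective : Function.Surjective (toNameSys hT h hc n) := by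
  rintro ⟨_, x, rfl⟩
  exact ⟨x, rfl⟩

lemma toNameSys_act (a : Fin k → ℤ) (x : X) :
    toNameSys hT h hc n (T a x) = (nameSys hT h hc n).act a (toNameSys hT h hc n x) :=
  Subtype.ext (nameMap_act hT h n a x)

/-- Forgetting the last function. -/
noncomputable def nameProj (y : (nameSys hT h hc (n + 1)).carrier) : (nameSys hT h hc n).carrier :=
  ⟨fun g i => if i < n then y.1 g i else 0, by
    obtain ⟨_, x, rfl⟩ := y
    refine ⟨x, ?_⟩
    funext g i
    simp only [nameMap]
    split_ifs <;> first | rfl | omega⟩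

lemma nameProj_toNameSys (x : X) :
    nameProj hT h hc n (toNameSys hT h hc (n + 1) x) = toNameSys hT h hc n x := by
  refine Subtype.ext ?_
  funext g i
  simp only [nameProj, toNameSys, nameMap]
  split_ifs <;> first | rfl | omega

lemma isFactorMap_nameProj :
    IsFactorMap (nameSys hT h hc (n + 1)) (nameSys hT h hc n) (nameProj hT h hc n) := by
  refine ⟨?_, fun y => ?_, fun a y => ?_⟩
  · have h1 : Continuous fun y : (nameSys hT h hc (n + 1)).carrier =>
        (fun g i => if i < n then y.1 g i else 0 : (Fin k → ℤ) → ℕ → ℝ) := by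
      refine continuous_pi fun g => continuous_pi fun i => ?_
      split_ifs
      · exact (continuous_apply i).comp ((continuous_apply g).comp
          (continuous_nameSys_val hT h hc (n + 1)))
      · exact continuous_const
    have h2 : Continuous fun y : (nameSys hT h hc (n + 1)).carrier =>
        (⟨_, (nameProj hT h hc n y).2⟩ : range (nameMap T h n)) := h1.subtype_mk _
    exact h2
  · obtain ⟨x, rfl⟩ := toNameSys_surjective hT h hc n y
    exact ⟨_, nameProj_toNameSys hT h hc n x⟩
  · obtain ⟨x, rfl⟩ := toNameSys_surjective hT h hc (n + 1) y
    rw [← toNameSys_act, nameProj_toNameSys, nameProj_toNameSys, toNameSys_act]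

lemma htop_nameSys_lt_top (hh : ∀ i, NiceFn T (h i)) :
    htop (nameSys hT h hc n).carrier (nameSys hT h hc n).act < ⊤ := by
  refine htop_lt_top_of_nice (nameSys hT h hc n).isAction (ι := Fin n)
    (fun i y => y.1 0 i) (fun i => ?_) (fun i j => ?_) (fun y y' hyy' => ?_)
  · exact (continuous_apply (i : ℕ)).comp ((continuous_apply 0).comp
      (continuous_nameSys_val hT h hc n))
  · obtain ⟨L, hL, hcap⟩ := hh i j
    refine ⟨L, hL, fun y s hs hm => ?_⟩
    obtain ⟨x, rfl⟩ := toNameSys_surjective hT h hc n y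
    refine hcap x s hs fun m hms => ?_
    have h1 : ¬ ∃ i' : ℤ, (2 : ℝ) ^ j *
      ((nameSys hT h hc n).act m (toNameSys hT h hc n x)).1 0 i = i' := hm m hms
    rw [← toNameSys_act] at h1
    change ¬ ∃ i' : ℤ, (2 : ℝ) ^ j * h i (T m x) = i'
    simpa [toNameSys, nameMap, hT.map_zero] using h1
  · obtain ⟨x, rfl⟩ := toNameSys_surjective hT h hc n y
    obtain ⟨x', rfl⟩ := toNameSys_surjective hT h hc n y'
    refine Subtype.ext ?_
    funext g i
    simp only [toNameSys, nameMap]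
    split_ifs with hi
    · have h1 := hyy' ⟨i, hi⟩ g
      rw [← toNameSys_act, ← toNameSys_act] at h1
      simpa [toNameSys, nameMap, hT.map_zero, hi] using h1
    · rfl

/-- The identification of `X` with the inverse limit of its factors `nameSys`. -/
noncomputable def toLimit (x : X) :
    {z : ∀ n, (nameSys hT h hc n).carrier // ∀ n, nameProj hT h hc n (z (n + 1)) = z n} :=
  ⟨fun n => toNameSys hT h hc n x, fun n => nameProj_toNameSys hT h hc n x⟩

lemma continuous_toLimit : Continuous (toLimit hT h hc) :=
  (continuous_pi fun n => continuous_toNameSys hT h hc n).subtype_mk _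

lemma toLimit_injective (hsep : ∀ x y, (∀ i, h i x = h i y) → x = y) :
    Function.Injective (toLimit hT h hc) := by
  intro x y hxy
  refine hsep x y fun i => ?_
  have h1 := congrArg (fun z => (z.1 (i + 1)).1 0 i) hxy
  simpa [toLimit, toNameSys, nameMap, hT.map_zero] using h1

lemma toLimit_surjective : Function.Surjective (toLimit hT h hc) := by
  rintro ⟨z, hz⟩
  let K : ℕ → Set X := fun n => {x | toNameSys hT h hc n x = z n}
  have hKc : ∀ n, IsClosed (K n) := fun n =>
    isClosed_eq (continuous_toNameSys hT h hc n) continuous_const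
  obtain ⟨x, hx⟩ := IsCompact.nonempty_iInter_of_sequence_nonempty_isCompact_isClosed K
    (fun n x hx => by
      change toNameSys hT h hc n x = z n
      rw [← hz n, ← show toNameSys hT h hc (n + 1) x = z (n + 1) from hx, nameProj_toNameSys])
    (fun n => toNameSys_surjective hT h hc n (z n)) (hKc 0).isCompact hKc
  exact ⟨x, Subtype.ext (funext fun n => Set.mem_iInter.1 hx n)⟩

end Names

lemma exists_inverseLimit {k : ℕ} (hk : 1 ≤ k) {X : Type*} [MetricSpace X] [CompactSpace X]
    {T : (Fin k → ℤ) → X → X} (hT : IsZkAction T) (hmarker : MarkerProperty T)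
    (hmd : mdim X T = 0) :
    ∃ (Y : ℕ → ZkSystem k) (p : ∀ n, (Y (n + 1)).carrier → (Y n).carrier),
      (∀ n, IsFactorMap (Y (n + 1)) (Y n) (p n)) ∧
      (∀ n, htop (Y n).carrier (Y n).act < ⊤) ∧
      ∃ φ : X ≃ₜ {x : ∀ n, (Y n).carrier // ∀ n, p n (x (n + 1)) = x n},
        ∀ (g : Fin k → ℤ) (x : X) (n : ℕ),
          (φ (T g x)).val n = (Y n).act g ((φ x).val n) := by
  obtain ⟨h, hc, hn, hsep⟩ := exists_separating_nice hk hT hmarker hmd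
  let e := Equiv.ofBijective (toLimit hT h hc)
    ⟨toLimit_injective hT h hc hsep, toLimit_surjective hT h hc⟩
  refine ⟨nameSys hT h hc, nameProj hT h hc, isFactorMap_nameProj hT h hc,
    fun n => htop_nameSys_lt_top hT h hc n hn,
    (show Continuous e from continuous_toLimit hT h hc).homeoOfEquivCompactToT2,
    fun g x n => toNameSys_act hT h hc n g x⟩

/-- **Theorem.** A `ℤ^k`-system with the marker property has zero mean dimension
iff it is isomorphic (equivariantly homeomorphic) to the inverse limit of a
sequence of systems of finite topological entropy. -/
theorem stmt_0 (k : ℕ) (hk : 1 ≤ k)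
    (X : Type*) [MetricSpace X] [CompactSpace X]
    (T : (Fin k → ℤ) → X → X) (hT : IsZkAction T) (hmarker : MarkerProperty T) :
    mdim X T = 0 ↔
      ∃ (Y : ℕ → ZkSystem k) (p : ∀ n, (Y (n + 1)).carrier → (Y n).carrier),
        (∀ n, IsFactorMap (Y (n + 1)) (Y n) (p n)) ∧
        (∀ n, htop (Y n).carrier (Y n).act < ⊤) ∧
        ∃ φ : X ≃ₜ {x : ∀ n, (Y n).carrier // ∀ n, p n (x (n + 1)) = x n},
          ∀ (g : Fin k → ℤ) (x : X) (n : ℕ),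
            (φ (T g x)).val n = (Y n).act g ((φ x).val n) := by
  constructor
  · exact fun hmd => exists_inverseLimit hk hT hmarker hmd
  · rintro ⟨Y, p, -, hent, φ, hφ⟩
    exact mdim_eq_zero_of_inverseLimit Y p hent φ hφ
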